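/- arXiv:math/0002103 — 3 statements merged into one kernel-verified Lean document; each statement's English description precedes it below -/
import Mathlib

section
/- Let A be a set of positive integers with gcd(A) = 1, and let α > 0. Then A has asymptotic density α if and only if log p_A(n) ~ c₀√(αn) as n → ∞, where c₀ = π√(2/3). -/
/-!
Write `F(t) = ∑ pA A n exp (-(n t))` for the generating function of the partitions with parts in
`A`, and `L(t) = ∑ a ∈ A, exp (-(a t))` for the Laplace transform of `A`. The density of `A` and the
growth of `log (pA A n)` are both translated into statements about `t → 0⁺`, where Euler's product
relates `L` and `F`. Each translation is an equivalence.

* The density of `A` is `α` if and only if `t L(t) → α`. Applied to the bounded sequence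
  `ind A n - α`, this is Abel's theorem (`abel_bounded`) together with Karamata's Tauberian theorem
  (`karamata_bounded`), the latter proved by polynomial approximation.

* Taking logarithms in Euler's product gives `log F(t) = ∑ k ≥ 1, L(k t) / k` (`laplace_pA`), so
  with `D(t) = t L(t) - α` one has `t log F(t) - α π² / 6 = ∑ k ≥ 1, D(k t) / k²`. The function `D`
  is bounded, and Möbius inversion recovers it as `∑ k ≥ 1, μ(k) G(k t) / k²`, where `G` is the
  right-hand side. By dominated convergence, `D → 0` if and only if `G → 0`
  (`tendsto_dilates_iff`). Hence the density is `α` if and only if `t log F(t) → C` with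
  `C = α π² / 6`.

* `t log F(t) → C` if and only if `log (pA A n) / √n → 2 √C` (`tauber`, `abel_partition`). All
  directions but one follow from `pA A n exp (-(n t)) ≤ F(t)` or from direct summation. For the
  lower bound on `pA A n`, Chernoff's bound shows that at least half of `F(t)` comes from indices
  close to `C / t²`. Monotonicity of `pA A` would then give a lower bound at a single index. It
  need not be monotone, but since `gcd A = 1` every large integer is a sum of elements of `A`, so
  that `pA A m ≤ pA A n` whenever `n - m` is large enough (`pA_quasi_mono`), which suffices.

Finally `2 √(α π² / 6) = π √(2/3) √α`.
-/

open Filter Asymptotics Real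

/-- `pA A n` is the number of partitions of `n` all of whose parts lie in `A`. -/
noncomputable def pA (A : Set ℕ) (n : ℕ) : ℕ :=
  Nat.card {p : n.Partition // ∀ a ∈ p.parts, a ∈ A}

/-- `countA A x` is the number of elements of `A` not exceeding `x`. -/
noncomputable def countA (A : Set ℕ) (x : ℝ) : ℕ :=
  {a : ℕ | a ∈ A ∧ (a : ℝ) ≤ x}.ncard

/-! ### Abelian and Tauberian theorems for bounded sequences -/

lemma summable_bdd_exp {b : ℕ → ℝ} {M : ℝ} (hb : ∀ n, |b n| ≤ M) {t : ℝ} (ht : 0 < t) :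
    Summable (fun n : ℕ => b n * Real.exp (-(n * t))) := by
  have h : Summable (fun n : ℕ => M * Real.exp (-(n * t))) := by
    refine Summable.mul_left M ?_
    have := Real.summable_exp_nat_mul_iff.mpr (neg_lt_zero.mpr ht)
    simpa [mul_neg] using this
  refine Summable.of_norm_bounded h (fun n => ?_)
  rw [Real.norm_eq_abs, abs_mul, abs_of_pos (Real.exp_pos _)]
  gcongr
  exact hb n

lemma exp_neg_nat_mul (n : ℕ) (t : ℝ) : Real.exp (-(n * t)) = Real.exp (-t) ^ n := by
  rw [← Real.exp_nat_mul]; ring_nf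

lemma tsum_exp_neg {t : ℝ} (ht : 0 < t) :
    ∑' n : ℕ, Real.exp (-(n * t)) = (1 - Real.exp (-t))⁻¹ := by
  simp_rw [exp_neg_nat_mul]
  exact tsum_geometric_of_lt_one (Real.exp_pos _).le (by simpa using ht)

lemma one_sub_exp_neg_pos {t : ℝ} (ht : 0 < t) : 0 < 1 - Real.exp (-t) := by
  simpa using ht

lemma mul_inv_one_sub_exp_le {t : ℝ} (ht : 0 < t) : t * (1 - Real.exp (-t))⁻¹ ≤ 1 + t := by
  rw [← div_eq_mul_inv, div_le_iff₀ (one_sub_exp_neg_pos ht)]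
  have h1 : (1 + t) * Real.exp (-t) ≤ 1 := by
    rw [Real.exp_neg, ← div_eq_mul_inv, div_le_one (Real.exp_pos _)]
    linarith [Real.add_one_le_exp t]
  linarith

lemma tendsto_const_mul_nhdsGT {c : ℝ} (hc : 0 < c) :
    Tendsto (fun t : ℝ => c * t) (nhdsWithin 0 (Set.Ioi 0)) (nhdsWithin 0 (Set.Ioi 0)) := by
  refine tendsto_nhdsWithin_iff.mpr ⟨?_, ?_⟩
  · have : Tendsto (fun t : ℝ => c * t) (nhds 0) (nhds (c * 0)) :=
      Continuous.tendsto (by fun_prop) _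
    rw [mul_zero] at this
    exact this.mono_left nhdsWithin_le_nhds
  · filter_upwards [self_mem_nhdsWithin] with t ht
    exact Set.mem_Ioi.mpr (mul_pos hc ht)

/-- Abel's theorem: if `b` is bounded with Cesàro means tending to `0`, then its Laplace
transform is `o(1/t)`. With `S` the partial sums and `x = exp (-t)`, summation by parts gives
`∑ b n x ^ n = (1 - x) ∑ S n x ^ n`, and `|S N| ≤ K + ε N` bounds the right-hand side. -/
lemma abel_bounded {b : ℕ → ℝ} {M : ℝ} (hb : ∀ n, |b n| ≤ M)
    (h : Tendsto (fun N : ℕ => (∑ n ∈ Finset.range (N + 1), b n) / N) atTop (nhds 0)) :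
    Tendsto (fun t : ℝ => t * ∑' n : ℕ, b n * Real.exp (-(n * t))) (nhdsWithin 0 (Set.Ioi 0))
      (nhds 0) := by
  set S : ℕ → ℝ := fun N => ∑ n ∈ Finset.range (N + 1), b n with hS
  have key : ∀ ε > 0, ∃ K : ℝ, 0 ≤ K ∧ ∀ N, |S N| ≤ K + ε * N := by
    intro ε hε
    obtain ⟨N₀, hN₀⟩ := (Metric.tendsto_atTop.mp h) ε hε
    refine ⟨∑ n ∈ Finset.range (N₀ + 1), |S n|, Finset.sum_nonneg fun _ _ => abs_nonneg _, ?_⟩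
    intro N
    rcases le_or_gt N N₀ with hN | hN
    · have : |S N| ≤ ∑ n ∈ Finset.range (N₀ + 1), |S n| :=
        Finset.single_le_sum (f := fun n => |S n|) (fun _ _ => abs_nonneg _)
          (Finset.mem_range.mpr (by omega))
      have : 0 ≤ ε * N := by positivity
      linarith
    · have h2 := hN₀ N hN.le
      have hNpos : (0 : ℝ) < N := by exact_mod_cast (by omega : 0 < N)
      rw [Real.dist_eq, sub_zero, abs_div, abs_of_pos hNpos, div_lt_iff₀ hNpos] at h2
      have : 0 ≤ ∑ n ∈ Finset.range (N₀ + 1), |S n| := Finset.sum_nonneg fun _ _ => abs_nonneg _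
      linarith
  have main : ∀ t > 0, ∀ ε > 0, ∀ K : ℝ, (∀ N : ℕ, |S N| ≤ K + ε * N) →
      |t * ∑' n : ℕ, b n * Real.exp (-(n * t))| ≤ t * K + ε * (1 + t) := by
    intro t ht ε hε K hK
    set x := Real.exp (-t) with hx
    have hx0 : 0 < x := Real.exp_pos _
    have hx1 : 0 < 1 - x := one_sub_exp_neg_pos ht
    have hxn : ‖x‖ < 1 := by rw [Real.norm_eq_abs, abs_of_pos hx0]; linarith
    have hsb := summable_bdd_exp hb ht
    simp_rw [exp_neg_nat_mul, ← hx] at hsb ⊢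
    have hs1 : Summable (fun n : ℕ => x ^ n) := summable_geometric_of_norm_lt_one hxn
    have hs2 : Summable (fun n : ℕ => (n : ℝ) * x ^ n) := by
      simpa using summable_pow_mul_geometric_of_norm_lt_one 1 hxn
    have hbound : HasSum (fun n : ℕ => (K + ε * n) * x ^ n)
        (K * (1 - x)⁻¹ + ε * (x / (1 - x) ^ 2)) := by
      have h1 := (hasSum_geometric_of_norm_lt_one hxn).mul_left K
      have h2 := (hasSum_coe_mul_geometric_of_norm_lt_one hxn).mul_left ε
      have e : (fun n : ℕ => (K + ε * n) * x ^ n)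
          = fun n : ℕ => K * x ^ n + ε * (n * x ^ n) := by
        funext n; ring
      rw [e]
      exact h1.add h2
    have habs : ∀ n, ‖S n * x ^ n‖ ≤ (K + ε * n) * x ^ n := by
      intro n
      rw [norm_mul, Real.norm_eq_abs, Real.norm_eq_abs, abs_of_pos (pow_pos hx0 n)]
      gcongr
      exact hK n
    have hsS : Summable (fun n : ℕ => S n * x ^ n) :=
      Summable.of_norm_bounded hbound.summable habs
    have hid : ∑' n, b n * x ^ n = (1 - x) * ∑' n, S n * x ^ n := by
      have e0 : ∑' n, S n * x ^ n = S 0 + ∑' n, S (n + 1) * x ^ (n + 1) := by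
        rw [hsS.tsum_eq_zero_add]; simp
      have e1 : ∑' n, b n * x ^ n = b 0 + ∑' n, b (n + 1) * x ^ (n + 1) := by
        rw [hsb.tsum_eq_zero_add]; simp
      have e2 : ∑' n, b (n + 1) * x ^ (n + 1)
          = ∑' n, S (n + 1) * x ^ (n + 1) - x * ∑' n, S n * x ^ n := by
        rw [← tsum_mul_left, ← Summable.tsum_sub ((summable_nat_add_iff 1).mpr hsS)
          (hsS.mul_left x)]
        refine tsum_congr fun n => ?_
        have : S (n + 1) = S n + b (n + 1) := by simp only [hS]; rw [Finset.sum_range_succ]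
        rw [this]; ring
      have e3 : S 0 = b 0 := by simp [hS]
      rw [e1, e2, ← e3]
      linear_combination (-1 : ℝ) * e0
    have hle : |∑' n, S n * x ^ n| ≤ K * (1 - x)⁻¹ + ε * (x / (1 - x) ^ 2) :=
      tsum_of_norm_bounded hbound habs
    rw [hid, abs_mul, abs_mul, abs_of_pos ht, abs_of_pos hx1]
    have h3 : (1 - x) * (K * (1 - x)⁻¹ + ε * (x / (1 - x) ^ 2)) = K + ε * (x * (1 - x)⁻¹) := by
      field_simp
    calc t * ((1 - x) * |∑' n, S n * x ^ n|)
        ≤ t * ((1 - x) * (K * (1 - x)⁻¹ + ε * (x / (1 - x) ^ 2))) := by gcongr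
      _ = t * K + ε * x * (t * (1 - x)⁻¹) := by rw [h3]; ring
      _ ≤ t * K + ε * 1 * (1 + t) := by
        have := mul_inv_one_sub_exp_le ht
        rw [← hx] at this
        gcongr
        linarith
      _ = _ := by ring
  rw [Metric.tendsto_nhds]
  intro ε hε
  obtain ⟨K, hK0, hK⟩ := key (ε / 2) (by positivity)
  have hlim : Tendsto (fun t : ℝ => t * K + ε / 2 * (1 + t)) (nhdsWithin 0 (Set.Ioi 0))
      (nhds (0 * K + ε / 2 * (1 + 0))) := by
    apply Tendsto.mono_left _ nhdsWithin_le_nhds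
    apply Continuous.tendsto
    fun_prop
  have hev := hlim.eventually (gt_mem_nhds (show 0 * K + ε / 2 * (1 + 0) < ε by linarith))
  filter_upwards [hev, self_mem_nhdsWithin] with t h1 h2
  rw [Real.dist_eq, sub_zero]
  exact (main t h2 (ε / 2) (by positivity) K hK).trans_lt h1

/-- The piecewise linear cutoff which, for `δ > 0`, equals `1` on `u ≤ 1` and `0` on
`u ≥ 1 + δ`. -/
noncomputable def ramp (δ u : ℝ) : ℝ := max 0 (min 1 ((1 + δ - u) / δ))

lemma ramp_eq_one {δ u : ℝ} (hδ : 0 < δ) (hu : u ≤ 1) : ramp δ u = 1 := by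
  unfold ramp
  rw [min_eq_left, max_eq_right zero_le_one]
  rw [le_div_iff₀ hδ]; linarith

lemma ramp_eq_zero {δ u : ℝ} (hδ : 0 < δ) (hu : 1 + δ ≤ u) : ramp δ u = 0 := by
  unfold ramp
  rw [max_eq_left]
  exact (min_le_right _ _).trans (div_nonpos_of_nonpos_of_nonneg (by linarith) hδ.le)

lemma ramp_nonneg (δ u : ℝ) : 0 ≤ ramp δ u := le_max_left _ _

lemma ramp_le_one (δ u : ℝ) : ramp δ u ≤ 1 := max_le zero_le_one (min_le_left _ _)

/-- The continuous function `y ↦ ramp δ (-log y) / y`, with `y` truncated below at `exp (-3)`.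
The truncation is harmless when `0 < δ ≤ 1`, because `ramp δ u` already vanishes for `u ≥ 2`; it
makes the function continuous on the whole real line. -/
noncomputable def rampKernel (δ y : ℝ) : ℝ :=
  ramp δ (-Real.log (max y (Real.exp (-3)))) / max y (Real.exp (-3))

lemma continuous_rampKernel (δ : ℝ) : Continuous (rampKernel δ) := by
  have hpos : ∀ y : ℝ, max y (Real.exp (-3)) ≠ 0 := fun y =>
    (lt_max_of_lt_right (Real.exp_pos _)).ne'
  unfold rampKernel ramp
  refine Continuous.div ?_ (by fun_prop) hpos
  have : Continuous fun y : ℝ => Real.log (max y (Real.exp (-3))) :=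
    Continuous.log (by fun_prop) hpos
  fun_prop

lemma exp_mul_rampKernel {δ u : ℝ} (hδ : 0 < δ) (hδ1 : δ ≤ 1) :
    Real.exp (-u) * rampKernel δ (Real.exp (-u)) = ramp δ u := by
  unfold rampKernel
  rcases le_or_gt u 3 with h | h
  · rw [max_eq_left (by simpa using h), Real.log_exp, neg_neg]
    field_simp
  · rw [max_eq_right (by simpa using h.le), Real.log_exp, neg_neg, ramp_eq_zero hδ (by linarith),
      ramp_eq_zero hδ (by linarith)]
    simp

/-- A monomial `y ^ k` turns the kernel `exp (-(n t))` into `exp (-(n (k + 1) t))`, which is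
the hypothesis at the dilated point `(k + 1) t`. -/
lemma tendsto_polynomial_kernel {b : ℕ → ℝ} {M : ℝ} (hb : ∀ n, |b n| ≤ M)
    (h : Tendsto (fun t : ℝ => t * ∑' n : ℕ, b n * Real.exp (-(n * t)))
      (nhdsWithin 0 (Set.Ioi 0)) (nhds 0)) (P : Polynomial ℝ) :
    Tendsto (fun t : ℝ => t * ∑' n : ℕ, b n * (Real.exp (-(n * t)) * P.eval (Real.exp (-(n * t)))))
      (nhdsWithin 0 (Set.Ioi 0)) (nhds 0) := by
  have hmono : ∀ k : ℕ, Tendsto (fun t : ℝ => t * ∑' n : ℕ, b n * Real.exp (-(n * ((k + 1) * t))))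
      (nhdsWithin 0 (Set.Ioi 0)) (nhds 0) := by
    intro k
    have := (h.comp (tendsto_const_mul_nhdsGT (c := (k : ℝ) + 1) (by positivity))).const_mul ((k : ℝ) + 1)⁻¹
    rw [mul_zero] at this
    refine this.congr fun t => ?_
    simp only [Function.comp]
    field_simp
  have hlin : ∀ t > 0, t * ∑' n : ℕ, b n * (Real.exp (-(n * t)) * P.eval (Real.exp (-(n * t))))
      = ∑ k ∈ Finset.range (P.natDegree + 1),
        P.coeff k * (t * ∑' n : ℕ, b n * Real.exp (-(n * ((k + 1) * t)))) := by
    intro t ht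
    have h1 : ∀ n : ℕ, b n * (Real.exp (-(n * t)) * P.eval (Real.exp (-(n * t))))
        = ∑ k ∈ Finset.range (P.natDegree + 1),
          P.coeff k * (b n * Real.exp (-(n * ((k + 1) * t)))) := by
      intro n
      rw [Polynomial.eval_eq_sum_range, Finset.mul_sum, Finset.mul_sum]
      refine Finset.sum_congr rfl fun k _ => ?_
      have : Real.exp (-(n * ((k + 1) * t))) = Real.exp (-(n * t)) * Real.exp (-(n * t)) ^ k := by
        rw [← Real.exp_nat_mul, ← Real.exp_add]; ring_nf
      rw [this]; ring
    simp_rw [h1]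
    rw [Summable.tsum_finsetSum, Finset.mul_sum]
    · refine Finset.sum_congr rfl fun k _ => ?_
      rw [tsum_mul_left]; ring
    · intro k _
      exact (summable_bdd_exp hb (by positivity)).mul_left _
  have hsum := tendsto_finsetSum (Finset.range (P.natDegree + 1))
    (fun k _ => (hmono k).const_mul (P.coeff k))
  simp only [mul_zero, Finset.sum_const_zero] at hsum
  refine hsum.congr' ?_
  filter_upwards [self_mem_nhdsWithin] with t ht
  exact (hlin t ht).symm

/-- Weierstrass approximation passes from polynomial test functions to continuous ones; the
error is controlled because `b` is bounded and `t ∑ exp (-(n t)) ≤ 1 + t`. -/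
lemma tendsto_continuous_kernel {b : ℕ → ℝ} {M : ℝ} (hb : ∀ n, |b n| ≤ M)
    (h : Tendsto (fun t : ℝ => t * ∑' n : ℕ, b n * Real.exp (-(n * t)))
      (nhdsWithin 0 (Set.Ioi 0)) (nhds 0)) {f : ℝ → ℝ} (hf : Continuous f) :
    Tendsto (fun t : ℝ => t * ∑' n : ℕ, b n * (Real.exp (-(n * t)) * f (Real.exp (-(n * t)))))
      (nhdsWithin 0 (Set.Ioi 0)) (nhds 0) := by
  have hM : 0 ≤ M := (abs_nonneg _).trans (hb 0)
  have hmem : ∀ (n : ℕ) (t : ℝ), 0 < t → Real.exp (-(n * t)) ∈ Set.Icc (0 : ℝ) 1 := by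
    intro n t ht
    refine ⟨(Real.exp_pos _).le, Real.exp_le_one_iff.mpr ?_⟩
    have : 0 ≤ n * t := by positivity
    linarith
  have hsm : ∀ g : ℝ → ℝ, Continuous g → ∀ t > 0,
      Summable (fun n : ℕ => b n * (Real.exp (-(n * t)) * g (Real.exp (-(n * t))))) := by
    intro g hg t ht
    obtain ⟨C, hC⟩ := (isCompact_Icc (a := (0 : ℝ)) (b := 1)).exists_bound_of_continuousOn
      hg.continuousOn
    have : ∀ n : ℕ, |b n * g (Real.exp (-(n * t)))| ≤ M * C := by
      intro n
      rw [abs_mul]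
      exact mul_le_mul (hb n) (hC _ (hmem n t ht)) (abs_nonneg _) hM
    refine (summable_bdd_exp this ht).congr fun n => ?_
    ring
  rw [Metric.tendsto_nhds]
  intro ε hε
  set η := ε / (4 * (M + 1)) with hη
  have hη0 : 0 < η := by positivity
  obtain ⟨P, hP⟩ := exists_polynomial_near_of_continuousOn 0 1 f hf.continuousOn η hη0
  have hlim := tendsto_polynomial_kernel hb h P
  have hev := (Metric.tendsto_nhds.mp hlim) (ε / 2) (by positivity)
  have ht1 : ∀ᶠ t : ℝ in nhdsWithin 0 (Set.Ioi 0), t < 1 :=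
    nhdsWithin_le_nhds (gt_mem_nhds one_pos)
  filter_upwards [hev, self_mem_nhdsWithin, ht1] with t h1 h2 h3
  have ht : 0 < t := h2
  rw [Real.dist_eq, sub_zero] at h1 ⊢
  have hdiff : |∑' n : ℕ, b n * (Real.exp (-(n * t)) * f (Real.exp (-(n * t))))
      - ∑' n : ℕ, b n * (Real.exp (-(n * t)) * P.eval (Real.exp (-(n * t))))|
      ≤ M * η * (1 - Real.exp (-t))⁻¹ := by
    rw [← Summable.tsum_sub (hsm f hf t ht) (hsm _ P.continuous t ht)]
    have hb1 : HasSum (fun n : ℕ => M * η * Real.exp (-(n * t))) (M * η * (1 - Real.exp (-t))⁻¹) := by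
      refine HasSum.mul_left _ ?_
      rw [← tsum_exp_neg ht]
      have := summable_bdd_exp (b := fun _ => 1) (M := 1) (by simp) ht
      simp only [one_mul] at this
      exact this.hasSum
    refine tsum_of_norm_bounded (E := ℝ) hb1 fun n => ?_
    rw [← mul_sub, ← mul_sub, norm_mul, norm_mul, Real.norm_eq_abs, Real.norm_eq_abs,
      Real.norm_eq_abs, abs_of_pos (Real.exp_pos _), abs_sub_comm, mul_assoc,
      mul_comm (Real.exp _)]
    have := (hP _ (hmem n t ht)).le
    gcongr
    exact hb n
  have h5 : t * (M * η * (1 - Real.exp (-t))⁻¹) ≤ M * η * 2 := by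
    have := mul_inv_one_sub_exp_le ht
    calc t * (M * η * (1 - Real.exp (-t))⁻¹) = M * η * (t * (1 - Real.exp (-t))⁻¹) := by ring
      _ ≤ M * η * 2 := by gcongr; linarith
  have h6 : M * η * 2 < ε / 2 := by
    have : (M + 1) * η * 4 = ε := by rw [hη]; field_simp
    nlinarith
  set X := ∑' n : ℕ, b n * (Real.exp (-(n * t)) * f (Real.exp (-(n * t))))
  set Y := ∑' n : ℕ, b n * (Real.exp (-(n * t)) * P.eval (Real.exp (-(n * t))))
  calc |t * X| = |t * (X - Y) + t * Y| := by ring_nf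
    _ ≤ |t * (X - Y)| + |t * Y| := abs_add_le _ _
    _ = t * |X - Y| + |t * Y| := by rw [abs_mul, abs_of_pos ht]
    _ ≤ t * (M * η * (1 - Real.exp (-t))⁻¹) + |t * Y| := by gcongr
    _ < ε := by linarith

/-- Karamata's Tauberian theorem for a bounded sequence, converse to `abel_bounded`. For
`t = 1 / N` the kernel `ramp δ (n / N)` is the indicator of `n ≤ N` up to about `δ N` further
terms, each at most `M`. -/
lemma karamata_bounded {b : ℕ → ℝ} {M : ℝ} (hb : ∀ n, |b n| ≤ M)
    (h : Tendsto (fun t : ℝ => t * ∑' n : ℕ, b n * Real.exp (-(n * t)))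
      (nhdsWithin 0 (Set.Ioi 0)) (nhds 0)) :
    Tendsto (fun N : ℕ => (∑ n ∈ Finset.range (N + 1), b n) / N) atTop (nhds 0) := by
  have hM : 0 ≤ M := (abs_nonneg _).trans (hb 0)
  have hseq : Tendsto (fun N : ℕ => (N : ℝ)⁻¹) atTop (nhdsWithin 0 (Set.Ioi 0)) :=
    tendsto_inv_atTop_nhdsGT_zero.comp tendsto_natCast_atTop_atTop
  rw [Metric.tendsto_nhds]
  intro ε hε
  set δ := min 1 (ε / (4 * (M + 1))) with hδ
  have hδ0 : 0 < δ := by positivity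
  have hδ1 : δ ≤ 1 := min_le_left _ _
  have hMδ : M * δ ≤ ε / 4 := by
    have h1 : δ ≤ ε / (4 * (M + 1)) := min_le_right _ _
    rw [le_div_iff₀ (by positivity)] at h1
    nlinarith
  have hk := (tendsto_continuous_kernel hb h (continuous_rampKernel δ)).comp hseq
  have hev := (Metric.tendsto_nhds.mp hk) (ε / 4) (by positivity)
  have hev2 : ∀ᶠ N : ℕ in atTop, M * (N : ℝ)⁻¹ < ε / 4 := by
    have : Tendsto (fun N : ℕ => M * (N : ℝ)⁻¹) atTop (nhds (M * 0)) :=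
      tendsto_inv_atTop_nhds_zero_nat.const_mul M
    exact this.eventually (gt_mem_nhds (by rw [mul_zero]; positivity))
  filter_upwards [hev, hev2, eventually_gt_atTop 0] with N h1 h2 hN
  have hN' : (0 : ℝ) < N := by exact_mod_cast hN
  simp only [Function.comp, exp_mul_rampKernel hδ0 hδ1] at h1
  rw [Real.dist_eq, sub_zero] at h1 ⊢
  set K := ⌈δ * N⌉₊ with hK
  have hK1 : δ * N ≤ K := Nat.le_ceil _
  have hK2 : (K : ℝ) ≤ δ * N + 1 := (Nat.ceil_lt_add_one (by positivity)).le
  have hts : ∑' n : ℕ, b n * ramp δ (n * (N : ℝ)⁻¹)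
      = ∑ n ∈ Finset.range (N + 1), b n
        + ∑ i ∈ Finset.range K, b (N + 1 + i) * ramp δ ((N + 1 + i : ℕ) * (N : ℝ)⁻¹) := by
    rw [tsum_eq_sum (s := Finset.range (N + 1 + K)), Finset.sum_range_add]
    · congr 1
      refine Finset.sum_congr rfl fun n hn => ?_
      have : (n : ℝ) ≤ N := by exact_mod_cast Nat.lt_succ_iff.mp (Finset.mem_range.mp hn)
      rw [ramp_eq_one hδ0, mul_one]
      rw [← div_eq_mul_inv, div_le_one hN']
      exact this
    · intro n hn
      rw [Finset.mem_range, not_lt] at hn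
      have : ((N + 1 + K : ℕ) : ℝ) ≤ n := by exact_mod_cast hn
      push_cast at this
      rw [ramp_eq_zero hδ0, mul_zero]
      rw [← div_eq_mul_inv, le_div_iff₀ hN']
      nlinarith
  have htail : |∑ i ∈ Finset.range K, b (N + 1 + i) * ramp δ ((N + 1 + i : ℕ) * (N : ℝ)⁻¹)|
      ≤ K * M := by
    refine (Finset.abs_sum_le_sum_abs _ _).trans ?_
    refine (Finset.sum_le_card_nsmul _ _ M fun i _ => ?_).trans (by simp)
    rw [abs_mul, abs_of_nonneg (ramp_nonneg _ _)]
    exact (mul_le_of_le_one_right (abs_nonneg _) (ramp_le_one _ _)).trans (hb _)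
  set X := ∑ n ∈ Finset.range (N + 1), b n
  set Y := ∑ i ∈ Finset.range K, b (N + 1 + i) * ramp δ ((N + 1 + i : ℕ) * (N : ℝ)⁻¹)
  rw [hts] at h1
  calc |X / N| = |(N : ℝ)⁻¹ * (X + Y) - (N : ℝ)⁻¹ * Y| := by congr 1; field_simp; ring
    _ ≤ |(N : ℝ)⁻¹ * (X + Y)| + |(N : ℝ)⁻¹ * Y| := abs_sub _ _
    _ = |(N : ℝ)⁻¹ * (X + Y)| + (N : ℝ)⁻¹ * |Y| := by
        rw [abs_mul _ Y, abs_of_pos (inv_pos.mpr hN')]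
    _ ≤ |(N : ℝ)⁻¹ * (X + Y)| + (N : ℝ)⁻¹ * (K * M) := by gcongr
    _ ≤ |(N : ℝ)⁻¹ * (X + Y)| + (N : ℝ)⁻¹ * ((δ * N + 1) * M) := by gcongr
    _ = |(N : ℝ)⁻¹ * (X + Y)| + (M * δ + M * (N : ℝ)⁻¹) := by
        congr 1; field_simp
    _ < ε := by linarith

/-! ### Möbius inversion of sums over dilates -/

lemma summable_pnat_inv_sq : Summable (fun k : ℕ+ => ((k : ℝ) ^ 2)⁻¹) := by
  have : Summable (fun k : ℕ => ((k : ℝ) ^ 2)⁻¹) := Real.summable_nat_pow_inv.mpr one_lt_two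
  exact this.comp_injective PNat.coe_injective

/-- Dominated convergence for the sum of the dilates `t ↦ D (k t)` with weights `a k / k²`. -/
lemma tannery_dilates {D : ℝ → ℝ} {M : ℝ} (hM : ∀ t > 0, |D t| ≤ M) {a : ℕ+ → ℝ}
    (ha : ∀ k, |a k| ≤ 1) (hD : Tendsto D (nhdsWithin 0 (Set.Ioi 0)) (nhds 0)) :
    Tendsto (fun t : ℝ => ∑' k : ℕ+, a k * (D (k * t) * ((k : ℝ) ^ 2)⁻¹))
      (nhdsWithin 0 (Set.Ioi 0)) (nhds 0) := by
  have h0 : (0 : ℝ) = ∑' _ : ℕ+, (0 : ℝ) := by simp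
  have hlim := tendsto_tsum_of_dominated_convergence (𝓕 := nhdsWithin 0 (Set.Ioi 0))
    (f := fun (t : ℝ) (k : ℕ+) => a k * (D (k * t) * ((k : ℝ) ^ 2)⁻¹)) (g := fun _ => 0)
    (summable_pnat_inv_sq.mul_left M) ?_ ?_
  · simpa only [← h0] using hlim
  · intro k
    have hk : (0 : ℝ) < k := by exact_mod_cast k.pos
    have := ((hD.comp (tendsto_const_mul_nhdsGT hk)).mul_const ((k : ℝ) ^ 2)⁻¹).const_mul (a k)
    simpa only [zero_mul, mul_zero, Function.comp] using this
  · filter_upwards [self_mem_nhdsWithin] with t ht k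
    have hk : (0 : ℝ) < k := by exact_mod_cast k.pos
    have h1 := hM (k * t) (mul_pos hk ht)
    have h2 : (0 : ℝ) ≤ ((k : ℝ) ^ 2)⁻¹ := by positivity
    rw [Real.norm_eq_abs, abs_mul, abs_mul, abs_of_nonneg h2]
    calc |a k| * (|D (k * t)| * ((k : ℝ) ^ 2)⁻¹) ≤ 1 * (M * ((k : ℝ) ^ 2)⁻¹) := by
          gcongr
          exact ha k
      _ = _ := one_mul _

/-- Möbius inversion for the operator taking `D` to `∑ j, D (j t) / j²`: the pairs `(k, j)` are
grouped by their product `n`, and `∑ k ∣ n, μ k` vanishes unless `n = 1`. -/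
lemma moebius_dilates {D : ℝ → ℝ} {M : ℝ} (hM : ∀ t > 0, |D t| ≤ M) {t : ℝ} (ht : 0 < t) :
    D t = ∑' k : ℕ+, (ArithmeticFunction.moebius k : ℝ) *
      ((∑' j : ℕ+, D (j * (k * t)) * ((j : ℝ) ^ 2)⁻¹) * ((k : ℝ) ^ 2)⁻¹) := by
  have hM0 : 0 ≤ M := (abs_nonneg _).trans (hM t ht)
  set F : ℕ+ × ℕ+ → ℝ := fun p => (ArithmeticFunction.moebius p.1 : ℝ) *
    ((D (p.2 * (p.1 * t)) * ((p.2 : ℝ) ^ 2)⁻¹) * ((p.1 : ℝ) ^ 2)⁻¹) with hF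
  have hmu : ∀ k : ℕ, |(ArithmeticFunction.moebius k : ℝ)| ≤ 1 := fun k => by
    exact_mod_cast ArithmeticFunction.abs_moebius_le_one (n := k)
  have hFs : Summable F := by
    have hprod := (summable_pnat_inv_sq.mul_of_nonneg summable_pnat_inv_sq
      (fun k => by positivity) (fun k => by positivity)).mul_left M
    refine Summable.of_norm_bounded hprod fun p => ?_
    have hk : (0 : ℝ) < p.1 := by exact_mod_cast p.1.pos
    have hj : (0 : ℝ) < p.2 := by exact_mod_cast p.2.pos
    have h1 := hM (p.2 * (p.1 * t)) (by positivity)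
    have h2 : (0 : ℝ) ≤ ((p.1 : ℝ) ^ 2)⁻¹ := by positivity
    have h3 : (0 : ℝ) ≤ ((p.2 : ℝ) ^ 2)⁻¹ := by positivity
    rw [hF, Real.norm_eq_abs]
    simp only [abs_mul]
    rw [abs_of_nonneg h2, abs_of_nonneg h3]
    calc _ ≤ 1 * (M * ((p.2 : ℝ) ^ 2)⁻¹ * ((p.1 : ℝ) ^ 2)⁻¹) := by
          gcongr
          exact hmu _
      _ = _ := by ring
  have h1 : ∑' k : ℕ+, (ArithmeticFunction.moebius k : ℝ) *
      ((∑' j : ℕ+, D (j * (k * t)) * ((j : ℝ) ^ 2)⁻¹) * ((k : ℝ) ^ 2)⁻¹) = ∑' p, F p := by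
    rw [hFs.tsum_prod]
    refine tsum_congr fun k => ?_
    rw [← tsum_mul_right, ← tsum_mul_left]
  rw [h1, ← sigmaAntidiagonalEquivProd.tsum_eq F]
  have hFs' := sigmaAntidiagonalEquivProd.summable_iff.mpr hFs
  rw [Summable.tsum_sigma (by exact hFs')]
  have h2 : ∀ n : ℕ+, ∑' x : Nat.divisorsAntidiagonal n, F (sigmaAntidiagonalEquivProd ⟨n, x⟩)
      = D (n * t) * ((n : ℝ) ^ 2)⁻¹ * (if (n : ℕ) = 1 then 1 else 0) := by
    intro n
    have h3 : ∀ x : Nat.divisorsAntidiagonal n, F (sigmaAntidiagonalEquivProd ⟨n, x⟩)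
        = D (n * t) * ((n : ℝ) ^ 2)⁻¹ * (ArithmeticFunction.moebius x.1.1 : ℝ) := by
      intro x
      have hx : ((x.1.1 : ℕ) : ℝ) * (x.1.2 : ℕ) = ((n : ℕ) : ℝ) := by
        exact_mod_cast (Nat.mem_divisorsAntidiagonal.mp x.2).1
      have e1 : (((sigmaAntidiagonalEquivProd ⟨n, x⟩).1 : ℕ+) : ℕ) = x.1.1 := rfl
      have e2 : (((sigmaAntidiagonalEquivProd ⟨n, x⟩).2 : ℕ+) : ℕ) = x.1.2 := rfl
      simp only [hF, e1, e2]
      rw [← hx, mul_pow, mul_inv]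
      rw [show ((x.1.2 : ℕ) : ℝ) * (((x.1.1 : ℕ) : ℝ) * t) = (x.1.1 : ℕ) * (x.1.2 : ℕ) * t by ring]
      ring
    simp_rw [h3]
    rw [tsum_mul_left, Finset.tsum_subtype (Nat.divisorsAntidiagonal n)
      (fun x => (ArithmeticFunction.moebius x.1 : ℝ))]
    congr 1
    have h4 := congrArg (fun f : ArithmeticFunction ℤ => f n)
      ArithmeticFunction.moebius_mul_coe_zeta
    simp only [ArithmeticFunction.coe_mul_zeta_apply, ArithmeticFunction.one_apply] at h4
    rw [Nat.sum_divisorsAntidiagonal (fun i _ => (ArithmeticFunction.moebius i : ℝ))]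
    exact_mod_cast h4
  simp_rw [h2]
  rw [tsum_eq_single 1]
  · simp
  · intro n hn
    have : (n : ℕ) ≠ 1 := by
      intro h; exact hn (PNat.coe_eq_one_iff.mp h)
    simp [this]

/-- A bounded `D` tends to `0` at `0⁺` if and only if the sum of its dilates with weights `1 / k²`
does. Both directions are `tannery_dilates`, with weights `1` and with weights `μ k`. -/
lemma tendsto_dilates_iff {D : ℝ → ℝ} {M : ℝ} (hM : ∀ t > 0, |D t| ≤ M) :
    Tendsto D (nhdsWithin 0 (Set.Ioi 0)) (nhds 0) ↔
    Tendsto (fun t : ℝ => ∑' k : ℕ+, D (k * t) * ((k : ℝ) ^ 2)⁻¹)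
      (nhdsWithin 0 (Set.Ioi 0)) (nhds 0) := by
  constructor
  · intro h
    simpa only [one_mul] using tannery_dilates hM (a := fun _ => 1) (by simp) h
  · intro h
    have hG : ∀ t > 0, |∑' k : ℕ+, D (k * t) * ((k : ℝ) ^ 2)⁻¹|
        ≤ M * ∑' k : ℕ+, ((k : ℝ) ^ 2)⁻¹ := by
      intro t ht
      refine tsum_of_norm_bounded (E := ℝ) (summable_pnat_inv_sq.hasSum.mul_left M) fun k => ?_
      have hk : (0 : ℝ) < k := by exact_mod_cast k.pos
      have h2 : (0 : ℝ) ≤ ((k : ℝ) ^ 2)⁻¹ := by positivity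
      rw [Real.norm_eq_abs, abs_mul, abs_of_nonneg h2]
      exact mul_le_mul_of_nonneg_right (hM _ (mul_pos hk ht)) h2
    have := tannery_dilates hG (a := fun k => (ArithmeticFunction.moebius k : ℝ))
      (fun k => by exact_mod_cast ArithmeticFunction.abs_moebius_le_one (n := k)) h
    refine this.congr' ?_
    filter_upwards [self_mem_nhdsWithin] with t ht
    exact (moebius_dilates hM ht).symm

/-! ### Abelian and Tauberian theorems for sequences growing like `exp (c √n)` -/

lemma tendsto_mul_log_quadratic {K : ℝ} (hK : 0 < K) :
    Tendsto (fun t : ℝ => t * Real.log (K / t ^ 2 + 1)) (nhdsWithin 0 (Set.Ioi 0)) (nhds 0) := by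
  have h1 : Tendsto (fun t : ℝ => t * Real.log (K + t ^ 2) - 2 * (t * Real.log t))
      (nhdsWithin 0 (Set.Ioi 0)) (nhds (0 * Real.log (K + 0 ^ 2) - 2 * (0 * Real.log 0))) := by
    refine Tendsto.mono_left ?_ nhdsWithin_le_nhds
    have hc : Continuous (fun t : ℝ => t * Real.log (K + t ^ 2) - 2 * (t * Real.log t)) := by
      have := Real.continuous_mul_log
      have h2 : Continuous fun t : ℝ => Real.log (K + t ^ 2) :=
        Continuous.log (by fun_prop) (fun t => by positivity)
      fun_prop
    exact hc.tendsto 0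
  simp only [zero_mul, mul_zero, sub_zero] at h1
  refine h1.congr' ?_
  filter_upwards [self_mem_nhdsWithin] with t ht
  have ht' : (0 : ℝ) < t := ht
  have : K / t ^ 2 + 1 = (K + t ^ 2) / t ^ 2 := by field_simp
  rw [this, Real.log_div (by positivity) (by positivity), Real.log_pow]
  push_cast; ring

lemma coeff_le_laplace {p : ℕ → ℕ} (hs : ∀ t > 0, Summable fun n : ℕ => (p n : ℝ) * Real.exp (-(n * t)))
    (n : ℕ) {t : ℝ} (ht : 0 < t) :
    (p n : ℝ) * Real.exp (-(n * t)) ≤ ∑' n : ℕ, (p n : ℝ) * Real.exp (-(n * t)) :=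
  (hs t ht).le_tsum n fun _ _ => by positivity

/-- The Laplace transform at `t` is split at `n = (1 ± δ) C / t²`. The Chernoff bound, with the
exponent changed to `(1 - η) t` above the window and to `(1 + η) t` below it, controls the two tails,
and quasi-monotonicity bounds every `p n` in the window by `p N`. -/
lemma laplace_split {p : ℕ → ℕ} {N₀ : ℕ} (hmono : ∀ m n, m + N₀ ≤ n → p m ≤ p n)
    (hs : ∀ t > 0, Summable fun n : ℕ => (p n : ℝ) * Real.exp (-(n * t)))
    {C δ η t : ℝ} (hC : 0 < C) (hδ0 : 0 < δ) (hδ1 : δ < 1) (hη0 : 0 < η) (hη1 : η < 1)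
    (ht : 0 < t) {N : ℕ} (hN : (1 + δ) * C / t ^ 2 + N₀ ≤ N) :
    ∑' n : ℕ, (p n : ℝ) * Real.exp (-(n * t)) ≤
      Real.exp (-((1 + δ) * η * C / t)) * ∑' n : ℕ, (p n : ℝ) * Real.exp (-(n * ((1 - η) * t)))
      + Real.exp ((1 - δ) * η * C / t) * ∑' n : ℕ, (p n : ℝ) * Real.exp (-(n * ((1 + η) * t)))
      + ((1 + δ) * C / t ^ 2 + 1) * (p N * Real.exp (-((1 - δ) * C / t))) := by
  set R := ⌊(1 + δ) * C / t ^ 2⌋₊ with hR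
  set Q := (p N : ℝ) * Real.exp (-((1 - δ) * C / t)) with hQ
  have hQ0 : 0 ≤ Q := by positivity
  have hs1 := hs ((1 - η) * t) (mul_pos (by linarith) ht)
  have hs2 := hs ((1 + η) * t) (mul_pos (by linarith) ht)
  have h3 : HasSum (fun n : ℕ => if n ∈ Finset.range (R + 1) then Q else 0)
      (∑ n ∈ Finset.range (R + 1), if n ∈ Finset.range (R + 1) then Q else 0) :=
    hasSum_sum_of_ne_finset_zero fun n hn => by simp only [hn, if_false]
  have hsum := ((hs1.hasSum.mul_left (Real.exp (-((1 + δ) * η * C / t)))).add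
    (hs2.hasSum.mul_left (Real.exp ((1 - δ) * η * C / t)))).add h3
  have hcard : (∑ n ∈ Finset.range (R + 1), if n ∈ Finset.range (R + 1) then Q else 0)
      ≤ ((1 + δ) * C / t ^ 2 + 1) * Q := by
    rw [Finset.sum_congr rfl fun n hn => if_pos hn, Finset.sum_const, Finset.card_range,
      nsmul_eq_mul]
    push_cast
    have : (R : ℝ) ≤ (1 + δ) * C / t ^ 2 := Nat.floor_le (by positivity)
    gcongr
  refine le_trans ?_ (add_le_add_right hcard _)
  rw [← hsum.tsum_eq]
  refine Summable.tsum_le_tsum (fun n => ?_) (hs t ht) hsum.summable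
  rcases lt_or_ge ((n : ℝ) * t) ((1 - δ) * C / t) with hlo | hlo
  · have : (p n : ℝ) * Real.exp (-(n * t))
        ≤ Real.exp ((1 - δ) * η * C / t) * ((p n : ℝ) * Real.exp (-(n * ((1 + η) * t)))) := by
      rw [mul_left_comm, ← Real.exp_add]
      gcongr
      have : η * (n * t) ≤ η * ((1 - δ) * C / t) := by gcongr
      have e : η * ((1 - δ) * C / t) = (1 - δ) * η * C / t := by ring
      linarith
    have h4 : 0 ≤ Real.exp (-((1 + δ) * η * C / t)) *
      ((p n : ℝ) * Real.exp (-(n * ((1 - η) * t)))) := by positivity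
    have h5 : (0 : ℝ) ≤ if n ∈ Finset.range (R + 1) then Q else 0 := by split_ifs <;> simp [hQ0]
    linarith
  · rcases lt_or_ge R n with hhi | hhi
    · have hn : (1 + δ) * C / t ^ 2 < n := (Nat.floor_lt' (by omega)).mp hhi
      have : (p n : ℝ) * Real.exp (-(n * t))
          ≤ Real.exp (-((1 + δ) * η * C / t)) * ((p n : ℝ) * Real.exp (-(n * ((1 - η) * t)))) := by
        rw [mul_left_comm, ← Real.exp_add]
        gcongr
        have : η * t * ((1 + δ) * C / t ^ 2) ≤ η * t * n := by gcongr
        have e : η * t * ((1 + δ) * C / t ^ 2) = (1 + δ) * η * C / t := by field_simp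
        linarith
      have h4 : 0 ≤ Real.exp ((1 - δ) * η * C / t) *
        ((p n : ℝ) * Real.exp (-(n * ((1 + η) * t)))) := by positivity
      have h5 : (0 : ℝ) ≤ if n ∈ Finset.range (R + 1) then Q else 0 := by split_ifs <;> simp [hQ0]
      linarith
    · rw [if_pos (Finset.mem_range.mpr (by omega))]
      have hRle : (R : ℝ) ≤ (1 + δ) * C / t ^ 2 := Nat.floor_le (by positivity)
      have hnN : n + N₀ ≤ N := by
        have : ((R + N₀ : ℕ) : ℝ) ≤ N := by push_cast; linarith
        have : R + N₀ ≤ N := by exact_mod_cast this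
        omega
      have hp : (p n : ℝ) ≤ p N := by exact_mod_cast hmono n N hnN
      have : (p n : ℝ) * Real.exp (-(n * t)) ≤ Q := by
        rw [hQ]; gcongr
      have h4 : 0 ≤ Real.exp ((1 - δ) * η * C / t) *
        ((p n : ℝ) * Real.exp (-(n * ((1 + η) * t)))) := by positivity
      have h5 : 0 ≤ Real.exp (-((1 + δ) * η * C / t)) *
        ((p n : ℝ) * Real.exp (-(n * ((1 - η) * t)))) := by positivity
      linarith

/-- If `log F(t) ~ C / t` and `C / r + q < C`, then `exp (q / t) F(r t)` is negligible compared
with `F t`: this disposes of each Chernoff tail. -/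
lemma chernoff_negligible {F : ℝ → ℝ} {C r q : ℝ} (hF : ∀ t > 0, 0 < F t)
    (h : Tendsto (fun t => t * Real.log (F t)) (nhdsWithin 0 (Set.Ioi 0)) (nhds C))
    (hr : 0 < r) (hq : C / r + q < C) :
    ∀ᶠ t in nhdsWithin 0 (Set.Ioi 0), Real.exp (q / t) * F (r * t) ≤ F t / 4 := by
  have h1 : Tendsto (fun t => r⁻¹ * (r * t * Real.log (F (r * t))) + q - t * Real.log (F t))
      (nhdsWithin 0 (Set.Ioi 0)) (nhds (r⁻¹ * C + q - C)) :=
    (((h.comp (tendsto_const_mul_nhdsGT hr)).const_mul r⁻¹).add_const q).sub h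
  have hneg : r⁻¹ * C + q - C < 0 := by
    have : C / r = r⁻¹ * C := by ring
    linarith
  have h2 := h1.neg_mul_atTop hneg tendsto_inv_nhdsGT_zero
  have h3 := h2.eventually (eventually_le_atBot (Real.log (1 / 4)))
  filter_upwards [h3, self_mem_nhdsWithin] with t h4 ht
  have ht' : (0 : ℝ) < t := ht
  have hF1 := hF (r * t) (by positivity)
  have hF2 := hF t ht'
  have e : (r⁻¹ * (r * t * Real.log (F (r * t))) + q - t * Real.log (F t)) * t⁻¹
      = q / t + Real.log (F (r * t)) - Real.log (F t) := by field_simp; ring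
  rw [e] at h4
  have h5 := Real.exp_le_exp.mpr (show q / t + Real.log (F (r * t))
    ≤ Real.log (1 / 4) + Real.log (F t) by linarith)
  rw [Real.exp_add, Real.exp_add, Real.exp_log hF1, Real.exp_log hF2,
    Real.exp_log (by norm_num)] at h5
  linarith

lemma laplace_pos {p : ℕ → ℕ} (h0 : p 0 = 1)
    (hs : ∀ t > 0, Summable fun n : ℕ => (p n : ℝ) * Real.exp (-(n * t))) {t : ℝ} (ht : 0 < t) :
    0 < ∑' n : ℕ, (p n : ℝ) * Real.exp (-(n * t)) := by
  have := coeff_le_laplace hs 0 ht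
  simp only [h0, Nat.cast_one, Nat.cast_zero, zero_mul, neg_zero, Real.exp_zero, mul_one] at this
  linarith

/-- Since the two tails amount to at most half of the Laplace transform, the window around
`C / t²` carries the other half, which forces `p N` to be large. -/
lemma tauber_lower_aux {p : ℕ → ℕ} {N₀ : ℕ} (h0 : p 0 = 1)
    (hmono : ∀ m n, m + N₀ ≤ n → p m ≤ p n)
    (hs : ∀ t > 0, Summable fun n : ℕ => (p n : ℝ) * Real.exp (-(n * t)))
    {C δ : ℝ} (hC : 0 < C) (hδ0 : 0 < δ) (hδ1 : δ ≤ 1 / 2)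
    (h : Tendsto (fun t : ℝ => t * Real.log (∑' n : ℕ, (p n : ℝ) * Real.exp (-(n * t))))
      (nhdsWithin 0 (Set.Ioi 0)) (nhds C)) :
    ∀ᶠ t : ℝ in nhdsWithin 0 (Set.Ioi 0), ∀ N : ℕ, (1 + δ) * C / t ^ 2 + N₀ ≤ N →
      (2 - 2 * δ) * C ≤ t * Real.log (p N) := by
  set F : ℝ → ℝ := fun t => ∑' n : ℕ, (p n : ℝ) * Real.exp (-(n * t)) with hFdef
  have hF : ∀ t > 0, 0 < F t := fun t ht => laplace_pos h0 hs ht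
  -- With `η = δ / 2` both Chernoff exponents are strictly below `C`, by a margin of order `δ²`.
  have hhi := chernoff_negligible (r := 1 - δ / 2) (q := -((1 + δ) * (δ / 2) * C)) hF h
    (by linarith) (by
      have : C / (1 - δ / 2) < C * (1 + (1 + δ) * (δ / 2)) := by
        rw [div_lt_iff₀ (by linarith)]
        have : 1 < (1 + (1 + δ) * (δ / 2)) * (1 - δ / 2) := by
          nlinarith [mul_pos hδ0 hδ0, mul_pos (mul_pos hδ0 hδ0) hδ0]
        nlinarith
      linarith)
  have hlo := chernoff_negligible (r := 1 + δ / 2) (q := (1 - δ) * (δ / 2) * C) hF h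
    (by linarith) (by
      have : C / (1 + δ / 2) < C * (1 - (1 - δ) * (δ / 2)) := by
        rw [div_lt_iff₀ (by linarith)]
        have : 1 < (1 - (1 - δ) * (δ / 2)) * (1 + δ / 2) := by
          nlinarith [mul_pos hδ0 hδ0, mul_pos (mul_pos hδ0 hδ0) hδ0]
        nlinarith
      linarith)
  have hlim : Tendsto (fun t : ℝ => t * Real.log (F t) + (1 - δ) * C - t * Real.log 2
      - t * Real.log ((1 + δ) * C / t ^ 2 + 1)) (nhdsWithin 0 (Set.Ioi 0))
      (nhds (C + (1 - δ) * C - 0 * Real.log 2 - 0)) := by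
    refine ((h.add_const _).sub ?_).sub (tendsto_mul_log_quadratic (by positivity))
    exact (tendsto_id.mono_left nhdsWithin_le_nhds).mul_const _
  have hev := hlim.eventually (lt_mem_nhds (show (2 - 2 * δ) * C < _ by nlinarith))
  filter_upwards [hhi, hlo, hev, self_mem_nhdsWithin] with t h1 h2 h3 ht N hN
  have ht' : (0 : ℝ) < t := ht
  have hsplit := laplace_split hmono hs (η := δ / 2) hC hδ0 (by linarith) (by linarith)
    (by linarith) ht' hN
  have hFt := hF t ht'
  have hle : F t / 2 ≤ ((1 + δ) * C / t ^ 2 + 1) * (p N * Real.exp (-((1 - δ) * C / t))) := by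
    rw [neg_div] at h1
    simp only [hFdef] at h1 h2 ⊢
    linarith
  have hpN : (0 : ℝ) < p N := by
    rcases Nat.eq_zero_or_pos (p N) with h4 | h4
    · rw [h4] at hle
      simp only [Nat.cast_zero, zero_mul, mul_zero] at hle
      linarith
    · exact_mod_cast h4
  have hlog := Real.log_le_log (by positivity) hle
  rw [Real.log_div hFt.ne' two_ne_zero, Real.log_mul (by positivity) (by positivity),
    Real.log_mul hpN.ne' (Real.exp_pos _).ne', Real.log_exp] at hlog
  have hmul := mul_le_mul_of_nonneg_left hlog ht'.le
  have e : t * (Real.log ((1 + δ) * C / t ^ 2 + 1) + (Real.log (p N) + -((1 - δ) * C / t)))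
      = t * Real.log ((1 + δ) * C / t ^ 2 + 1) + t * Real.log (p N) - (1 - δ) * C := by
    field_simp; ring
  rw [e] at hmul
  nlinarith

/-- `tauber_lower_aux` at `t = √((1 + 2 δ) C / n)`: the slack between `1 + δ` and `1 + 2 δ` absorbs
the shift `N₀`, and `δ` is then taken small enough in terms of `a`. -/
lemma tauber_lower {p : ℕ → ℕ} {N₀ : ℕ} (h0 : p 0 = 1)
    (hmono : ∀ m n, m + N₀ ≤ n → p m ≤ p n)
    (hs : ∀ t > 0, Summable fun n : ℕ => (p n : ℝ) * Real.exp (-(n * t)))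
    {C : ℝ} (hC : 0 < C)
    (h : Tendsto (fun t : ℝ => t * Real.log (∑' n : ℕ, (p n : ℝ) * Real.exp (-(n * t))))
      (nhdsWithin 0 (Set.Ioi 0)) (nhds C)) {a : ℝ} (ha : a < 2 * √C) :
    ∀ᶠ n : ℕ in atTop, a < Real.log (p n) / √n := by
  have hδlim : Tendsto (fun δ : ℝ => (2 - 2 * δ) * C / √((1 + 2 * δ) * C))
      (nhdsWithin 0 (Set.Ioi 0)) (nhds ((2 - 2 * 0) * C / √((1 + 2 * 0) * C))) := by
    refine Tendsto.mono_left ?_ nhdsWithin_le_nhds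
    have : ContinuousAt (fun δ : ℝ => (2 - 2 * δ) * C / √((1 + 2 * δ) * C)) 0 := by
      refine ContinuousAt.div (by fun_prop) (by fun_prop) ?_
      have : (0 : ℝ) < (1 + 2 * 0) * C := by linarith
      positivity
    exact this
  have hval : (2 - 2 * 0) * C / √((1 + 2 * 0) * C) = 2 * √C := by
    simp only [mul_zero, sub_zero, add_zero, one_mul]
    rw [mul_div_assoc, Real.div_sqrt]
  rw [hval] at hδlim
  have hhalf : ∀ᶠ δ : ℝ in nhdsWithin 0 (Set.Ioi 0), δ < 1 / 2 :=
    nhdsWithin_le_nhds (gt_mem_nhds (by norm_num))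
  obtain ⟨δ, hδa, hδh, hδ⟩ := ((hδlim.eventually (lt_mem_nhds ha)).and
    (hhalf.and self_mem_nhdsWithin)).exists
  have hδ0 : 0 < δ := hδ
  have hK : 0 < (1 + 2 * δ) * C := by positivity
  have haux := tauber_lower_aux h0 hmono hs hC hδ0 hδh.le h
  have hseq : Tendsto (fun n : ℕ => √((1 + 2 * δ) * C) * (√n)⁻¹) atTop
      (nhdsWithin 0 (Set.Ioi 0)) := by
    refine (tendsto_const_mul_nhdsGT (Real.sqrt_pos.mpr hK)).comp ?_
    exact tendsto_inv_atTop_nhdsGT_zero.comp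
      (Real.tendsto_sqrt_atTop.comp tendsto_natCast_atTop_atTop)
  have hlarge : ∀ᶠ n : ℕ in atTop, N₀ * (1 + 2 * δ) / δ ≤ n :=
    tendsto_natCast_atTop_atTop.eventually (eventually_ge_atTop _)
  filter_upwards [hseq.eventually haux, hlarge, eventually_gt_atTop 0] with n h1 h2 h3
  have hn : (0 : ℝ) < n := by exact_mod_cast h3
  have hsn : 0 < √(n : ℝ) := Real.sqrt_pos.mpr hn
  have hsK : 0 < √((1 + 2 * δ) * C) := Real.sqrt_pos.mpr hK
  have h4 := h1 n (by
    rw [mul_pow, inv_pow, Real.sq_sqrt hK.le, Real.sq_sqrt hn.le]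
    rw [div_le_iff₀ hδ0] at h2
    have : (1 + δ) * C / ((1 + 2 * δ) * C * (n : ℝ)⁻¹) = (1 + δ) * n / (1 + 2 * δ) := by
      field_simp
    rw [this, div_add' _ _ _ (by positivity), div_le_iff₀ (by positivity)]
    linarith)
  refine hδa.trans_le ?_
  rw [div_le_div_iff₀ hsK hsn]
  calc (2 - 2 * δ) * C * √n ≤ (√((1 + 2 * δ) * C) * (√n)⁻¹ * Real.log (p n)) * √n := by gcongr
    _ = _ := by field_simp

/-- Tauberian theorem for partition-like sequences: `log F(t) ~ C / t` implies
`log p n ~ 2 √(C n)`. The upper bound is `p n exp (-(n t)) ≤ F(t)` at the optimal `t = √(C / n)`. -/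
lemma tauber {p : ℕ → ℕ} {N₀ : ℕ} (h0 : p 0 = 1)
    (hmono : ∀ m n, m + N₀ ≤ n → p m ≤ p n)
    (hs : ∀ t > 0, Summable fun n : ℕ => (p n : ℝ) * Real.exp (-(n * t)))
    {C : ℝ} (hC : 0 < C)
    (h : Tendsto (fun t : ℝ => t * Real.log (∑' n : ℕ, (p n : ℝ) * Real.exp (-(n * t))))
      (nhdsWithin 0 (Set.Ioi 0)) (nhds C)) :
    Tendsto (fun n : ℕ => Real.log (p n) / √n) atTop (nhds (2 * √C)) := by
  refine tendsto_order.mpr ⟨fun a ha => tauber_lower h0 hmono hs hC h ha, fun a ha => ?_⟩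
  have hsC : 0 < √C := Real.sqrt_pos.mpr hC
  have hseq : Tendsto (fun n : ℕ => √C * (√n)⁻¹) atTop (nhdsWithin 0 (Set.Ioi 0)) := by
    refine (tendsto_const_mul_nhdsGT hsC).comp ?_
    exact tendsto_inv_atTop_nhdsGT_zero.comp
      (Real.tendsto_sqrt_atTop.comp tendsto_natCast_atTop_atTop)
  have hlim := ((h.comp hseq).div_const √C).add_const √C
  rw [Real.div_sqrt, ← two_mul] at hlim
  filter_upwards [hlim.eventually (gt_mem_nhds ha), eventually_gt_atTop 0,
    eventually_ge_atTop N₀] with n h1 h2 h3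
  refine lt_of_le_of_lt ?_ h1
  have hn : (0 : ℝ) < n := by exact_mod_cast h2
  have hsn : 0 < √(n : ℝ) := Real.sqrt_pos.mpr hn
  have hp : (0 : ℝ) < p n := by
    have := hmono 0 n (by omega)
    rw [h0] at this
    exact_mod_cast this
  have ht : 0 < √C * (√n)⁻¹ := by positivity
  have hle := Real.log_le_log (by positivity) (coeff_le_laplace hs n ht)
  rw [Real.log_mul hp.ne' (Real.exp_pos _).ne', Real.log_exp] at hle
  have e1 : (n : ℝ) * (√C * (√n)⁻¹) = √C * √n := by
    field_simp
    rw [Real.sq_sqrt hn.le]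
  rw [e1] at hle
  simp only [Function.comp]
  rw [div_le_iff₀ hsn, add_mul, div_mul_eq_mul_div]
  have e2 : ∀ X : ℝ, √C * (√n)⁻¹ * X * √n / √C = X := fun X => by field_simp
  rw [e2]
  linarith

/-- From `p n ≤ K exp (c √n)` with `c` slightly above `2 √C`, the inequality
`c √n ≤ C (1 + η)² / ((1 - η) t) + n (1 - η) t` leaves a geometric series of ratio `exp (-(η t))`,
whose logarithm is `o(1/t)`. -/
lemma abel_partition_upper {p : ℕ → ℕ}
    (h0 : p 0 = 1)
    (hs : ∀ t > 0, Summable fun n : ℕ => (p n : ℝ) * Real.exp (-(n * t)))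
    {C : ℝ} (hC : 0 < C)
    (h : Tendsto (fun n : ℕ => Real.log (p n) / √n) atTop (nhds (2 * √C))) {a : ℝ} (ha : C < a) :
    ∀ᶠ t : ℝ in nhdsWithin 0 (Set.Ioi 0),
      t * Real.log (∑' n : ℕ, (p n : ℝ) * Real.exp (-(n * t))) < a := by
  have hsC : 0 < √C := Real.sqrt_pos.mpr hC
  have hηlim : Tendsto (fun η : ℝ => C * (1 + η) ^ 2 / (1 - η))
      (nhdsWithin 0 (Set.Ioi 0)) (nhds (C * (1 + 0) ^ 2 / (1 - 0))) := by
    refine Tendsto.mono_left ?_ nhdsWithin_le_nhds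
    have : ContinuousAt (fun η : ℝ => C * (1 + η) ^ 2 / (1 - η)) 0 :=
      ContinuousAt.div (by fun_prop) (by fun_prop) (by norm_num)
    exact this
  have hval : C * (1 + 0) ^ 2 / (1 - 0) = C := by norm_num
  rw [hval] at hηlim
  have hone : ∀ᶠ η : ℝ in nhdsWithin 0 (Set.Ioi 0), η < 1 :=
    nhdsWithin_le_nhds (gt_mem_nhds (by norm_num))
  obtain ⟨η, hηa, hη1, hη⟩ := ((hηlim.eventually (gt_mem_nhds ha)).and
    (hone.and self_mem_nhdsWithin)).exists
  have hη0 : 0 < η := hη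
  set c := 2 * √C * (1 + η) with hc
  have hev := h.eventually (gt_mem_nhds (show 2 * √C < c by rw [hc]; nlinarith))
  obtain ⟨n₀, hn₀⟩ := eventually_atTop.mp hev
  set K : ℝ := 1 + ∑ n ∈ Finset.range (n₀ + 1), (p n : ℝ) with hK
  have hsum0 : (0 : ℝ) ≤ ∑ n ∈ Finset.range (n₀ + 1), (p n : ℝ) :=
    Finset.sum_nonneg fun _ _ => by positivity
  have hK1 : 1 ≤ K := by linarith
  have hbound : ∀ n, (p n : ℝ) ≤ K * Real.exp (c * √n) := by
    intro n
    rcases le_or_gt n n₀ with hn | hn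
    · have h1 : (p n : ℝ) ≤ ∑ n ∈ Finset.range (n₀ + 1), (p n : ℝ) :=
        Finset.single_le_sum (f := fun n => (p n : ℝ)) (fun _ _ => by positivity)
          (Finset.mem_range.mpr (by omega))
      have h2 : 1 ≤ Real.exp (c * √n) := Real.one_le_exp (by positivity)
      nlinarith
    · have h1 := hn₀ n hn.le
      have hsn : 0 < √(n : ℝ) := Real.sqrt_pos.mpr (by exact_mod_cast (by omega : 0 < n))
      rw [div_lt_iff₀ hsn] at h1
      have h2 : (p n : ℝ) ≤ Real.exp (c * √n) := by
        rcases Nat.eq_zero_or_pos (p n) with h3 | h3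
        · rw [h3]; simpa using (Real.exp_pos _).le
        · rw [← Real.exp_log (show (0 : ℝ) < p n by exact_mod_cast h3)]
          exact Real.exp_le_exp.mpr h1.le
      nlinarith [Real.exp_pos (c * √n)]
  have hmain : ∀ t > 0, t * Real.log (∑' n : ℕ, (p n : ℝ) * Real.exp (-(n * t)))
      ≤ t * Real.log K + C * (1 + η) ^ 2 / (1 - η) + t * Real.log ((1 + η * t) / (η * t)) := by
    intro t ht
    have h1η : 0 < 1 - η := by linarith
    have hηt : 0 < η * t := by positivity
    have hterm : ∀ n : ℕ, (p n : ℝ) * Real.exp (-(n * t))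
        ≤ K * Real.exp (C * (1 + η) ^ 2 / ((1 - η) * t)) * Real.exp (-(n * (η * t))) := by
      intro n
      -- The difference of the two sides is a perfect square divided by `(1 - η) t`.
      have hamgm : c * √n ≤ C * (1 + η) ^ 2 / ((1 - η) * t) + n * ((1 - η) * t) := by
        rw [← sub_nonneg]
        have hst : 0 < (1 - η) * t := by positivity
        have e : C * (1 + η) ^ 2 / ((1 - η) * t) + n * ((1 - η) * t) - c * √n
            = (√C * (1 + η) - (1 - η) * t * √n) ^ 2 / ((1 - η) * t) := by
          have e1 : √C ^ 2 = C := Real.sq_sqrt hC.le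
          have e2 : √(n : ℝ) ^ 2 = n := Real.sq_sqrt (Nat.cast_nonneg n)
          rw [hc, eq_div_iff hst.ne', sub_mul, add_mul, div_mul_cancel₀ _ hst.ne']
          linear_combination (-(1 + η) ^ 2) * e1 - ((1 - η) * t) ^ 2 * e2
        rw [e]; positivity
      calc (p n : ℝ) * Real.exp (-(n * t)) ≤ K * Real.exp (c * √n) * Real.exp (-(n * t)) := by
            gcongr
            exact hbound n
        _ ≤ K * Real.exp (C * (1 + η) ^ 2 / ((1 - η) * t) + n * ((1 - η) * t))
            * Real.exp (-(n * t)) := by gcongr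
        _ = _ := by
            rw [mul_assoc, mul_assoc, ← Real.exp_add, ← Real.exp_add]
            congr 2; ring
    have hsexp : Summable fun n : ℕ => Real.exp (-(n * (η * t))) := by
      have := summable_bdd_exp (b := fun _ => 1) (M := 1) (by simp) hηt
      simpa only [one_mul] using this
    have hF : ∑' n : ℕ, (p n : ℝ) * Real.exp (-(n * t))
        ≤ K * Real.exp (C * (1 + η) ^ 2 / ((1 - η) * t)) * ((1 + η * t) / (η * t)) := by
      refine (Summable.tsum_le_tsum hterm (hs t ht) (hsexp.mul_left _)).trans ?_
      rw [tsum_mul_left, tsum_exp_neg hηt]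
      have := mul_inv_one_sub_exp_le hηt
      gcongr
      rw [le_div_iff₀ hηt, mul_comm]
      exact this
    have hlog := Real.log_le_log (laplace_pos h0 hs ht) hF
    rw [Real.log_mul (by positivity) (by positivity), Real.log_mul (by positivity)
      (Real.exp_pos _).ne', Real.log_exp] at hlog
    have hmul := mul_le_mul_of_nonneg_left hlog ht.le
    refine hmul.trans (le_of_eq ?_)
    field_simp
  have hlim : Tendsto (fun t : ℝ => t * Real.log K + C * (1 + η) ^ 2 / (1 - η)
      + t * Real.log ((1 + η * t) / (η * t))) (nhdsWithin 0 (Set.Ioi 0))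
      (nhds (0 + C * (1 + η) ^ 2 / (1 - η) + 0)) := by
    refine Tendsto.add (Tendsto.add_const _ ?_) ?_
    · have : Tendsto (fun t : ℝ => t * Real.log K) (nhds 0) (nhds (0 * Real.log K)) :=
        Continuous.tendsto (by fun_prop) _
      rw [zero_mul] at this
      exact this.mono_left nhdsWithin_le_nhds
    · have hc1 : ContinuousAt (fun t : ℝ => t * Real.log (1 + η * t) - t * Real.log η
          - t * Real.log t) 0 := by
        have h1 : ContinuousAt (fun t : ℝ => Real.log (1 + η * t)) 0 :=
          ContinuousAt.log (by fun_prop) (by norm_num)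
        have h2 := Real.continuous_mul_log.continuousAt (x := 0)
        fun_prop
      have h3 := hc1.tendsto.mono_left (nhdsWithin_le_nhds (s := Set.Ioi 0))
      simp only [zero_mul, sub_zero] at h3
      refine h3.congr' ?_
      filter_upwards [self_mem_nhdsWithin] with t ht
      have ht' : (0 : ℝ) < t := ht
      rw [Real.log_div (by positivity) (by positivity), Real.log_mul hη0.ne' ht'.ne']
      ring
  filter_upwards [hlim.eventually (gt_mem_nhds (show _ < a by linarith)),
    self_mem_nhdsWithin] with t h1 h2
  exact (hmain t h2).trans_lt h1

/-- Converse of `tauber`. The lower bound keeps only the term with index `⌊C / t²⌋` of the Laplace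
transform. -/
lemma abel_partition {p : ℕ → ℕ} {N₀ : ℕ} (h0 : p 0 = 1)
    (hmono : ∀ m n, m + N₀ ≤ n → p m ≤ p n)
    (hs : ∀ t > 0, Summable fun n : ℕ => (p n : ℝ) * Real.exp (-(n * t)))
    {C : ℝ} (hC : 0 < C)
    (h : Tendsto (fun n : ℕ => Real.log (p n) / √n) atTop (nhds (2 * √C))) :
    Tendsto (fun t : ℝ => t * Real.log (∑' n : ℕ, (p n : ℝ) * Real.exp (-(n * t))))
      (nhdsWithin 0 (Set.Ioi 0)) (nhds C) := by
  refine tendsto_order.mpr ⟨fun a ha => ?_, fun a ha => abel_partition_upper h0 hs hC h ha⟩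
  have hx : Tendsto (fun t : ℝ => C * (t⁻¹) ^ 2) (nhdsWithin 0 (Set.Ioi 0)) atTop :=
    ((tendsto_pow_atTop two_ne_zero).comp tendsto_inv_nhdsGT_zero).const_mul_atTop hC
  have hfloor := tendsto_nat_floor_atTop.comp hx
  have hratio : Tendsto (fun t : ℝ => √((⌊C * (t⁻¹) ^ 2⌋₊ : ℝ) / (C * (t⁻¹) ^ 2)))
      (nhdsWithin 0 (Set.Ioi 0)) (nhds √1) :=
    (Real.continuous_sqrt.tendsto 1).comp (tendsto_nat_floor_div_atTop.comp hx)
  have hlim := ((((h.comp hfloor).mul hratio).mul_const √C).sub_const C)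
  have hval : 2 * √C * √1 * √C - C = C := by
    have := Real.mul_self_sqrt hC.le
    rw [Real.sqrt_one]; linarith
  rw [hval] at hlim
  have hbig : ∀ᶠ t : ℝ in nhdsWithin 0 (Set.Ioi 0), N₀ + 1 ≤ ⌊C * (t⁻¹) ^ 2⌋₊ :=
    hfloor.eventually (eventually_ge_atTop _)
  filter_upwards [hlim.eventually (lt_mem_nhds ha), hbig, self_mem_nhdsWithin] with t h1 h2 ht
  have ht' : (0 : ℝ) < t := ht
  refine h1.trans_le ?_
  simp only [Function.comp]
  set n := ⌊C * (t⁻¹) ^ 2⌋₊ with hn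
  have hnpos : (0 : ℝ) < n := by exact_mod_cast (by omega : 0 < n)
  have hsn : 0 < √(n : ℝ) := Real.sqrt_pos.mpr hnpos
  have hp : (0 : ℝ) < p n := by
    have := hmono 0 n (by omega)
    rw [h0] at this
    exact_mod_cast this
  have hle := Real.log_le_log (by positivity) (coeff_le_laplace hs n ht')
  rw [Real.log_mul hp.ne' (Real.exp_pos _).ne', Real.log_exp] at hle
  have hsC : 0 < √C := Real.sqrt_pos.mpr hC
  have e1 : Real.log (p n) / √n * √((n : ℝ) / (C * (t⁻¹) ^ 2)) * √C = t * Real.log (p n) := by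
    rw [Real.sqrt_div hnpos.le, Real.sqrt_mul hC.le, Real.sqrt_sq (by positivity)]
    field_simp
  rw [e1]
  have hnle : (n : ℝ) ≤ C * (t⁻¹) ^ 2 := Nat.floor_le (by positivity)
  have h3 : t * (n * t) ≤ C := by
    calc t * (n * t) ≤ t * (C * (t⁻¹) ^ 2 * t) := by gcongr
      _ = C := by field_simp
  have := mul_le_mul_of_nonneg_left hle ht'.le
  linarith

/-! ### Partitions with parts in `A` and Euler's product -/

lemma pA_zero (A : Set ℕ) : pA A 0 = 1 := by
  unfold pA
  rw [Nat.card_eq_one_iff_unique]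
  refine ⟨⟨fun p q => Subtype.ext (Subsingleton.elim _ _)⟩, ⟨⟨default, ?_⟩⟩⟩
  simp

lemma pA_mono_set {A B : Set ℕ} (h : A ⊆ B) (n : ℕ) : pA A n ≤ pA B n := by
  unfold pA
  exact Nat.card_le_card_of_injective
    (fun p : {p : n.Partition // ∀ a ∈ p.parts, a ∈ A} =>
      (⟨p.1, fun a ha => h (p.2 a ha)⟩ : {p : n.Partition // ∀ a ∈ p.parts, a ∈ B}))
    (fun p q hpq => Subtype.ext (congrArg Subtype.val hpq :))

/-- Parts larger than `N` cannot occur in a partition of `n ≤ N`. -/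
lemma pA_truncate (A : Set ℕ) {n N : ℕ} (h : n ≤ N) : pA (A ∩ Set.Iic N) n = pA A n := by
  refine le_antisymm (pA_mono_set Set.inter_subset_left n) ?_
  unfold pA
  exact Nat.card_le_card_of_injective
    (fun p : {p : n.Partition // ∀ a ∈ p.parts, a ∈ A} =>
      (⟨p.1, fun a ha => ⟨p.2 a ha, (p.1.le_of_mem_parts ha).trans h⟩⟩ :
        {p : n.Partition // ∀ a ∈ p.parts, a ∈ A ∩ Set.Iic N}))
    (fun p q hpq => Subtype.ext (congrArg Subtype.val hpq :))

/-- Adjoining a fixed multiset of parts with sum `n - m` embeds the partitions of `m` into those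
of `n`; such a multiset exists for all large `n - m` because the elements of `A` have no common
divisor. -/
lemma pA_quasi_mono {A : Set ℕ} (hA : ∀ a ∈ A, 0 < a)
    (hgcd : ∀ d : ℕ, (∀ a ∈ A, d ∣ a) → d = 1) :
    ∃ N₀ : ℕ, ∀ m n, m + N₀ ≤ n → pA A m ≤ pA A n := by
  obtain ⟨N₀, hN₀⟩ := Nat.exists_mem_closure_of_ge A
  have hg : Nat.setGcd A = 1 := hgcd _ fun a ha => Nat.setGcd_dvd_of_mem ha
  refine ⟨N₀, fun m n hmn => ?_⟩
  have hmem := hN₀ (n - m) (by omega) (by rw [hg]; exact one_dvd _)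
  obtain ⟨l, hl, hsum⟩ := AddSubmonoid.exists_multiset_of_mem_closure hmem
  unfold pA
  refine Nat.card_le_card_of_injective
    (fun p : {p : m.Partition // ∀ a ∈ p.parts, a ∈ A} =>
      (⟨⟨p.1.parts + l, fun {i} hi => ?_, ?_⟩, fun a ha => ?_⟩ :
        {p : n.Partition // ∀ a ∈ p.parts, a ∈ A})) ?_
  · rcases Multiset.mem_add.mp hi with h | h
    · exact p.1.parts_pos h
    · exact hA _ (hl _ h)
  · rw [Multiset.sum_add, p.1.parts_sum, hsum]; omega
  · rcases Multiset.mem_add.mp ha with h | h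
    · exact p.2 _ h
    · exact hl _ h
  · intro p q hpq
    have h1 := congrArg (fun r : {p : n.Partition // ∀ a ∈ p.parts, a ∈ A} => r.1.parts) hpq
    have h2 : p.1.parts = q.1.parts := Multiset.add_left_inj.mp h1
    exact Subtype.ext (Nat.Partition.ext h2)

/-- The power series `f` has nonnegative coefficients and converges to `v` at `x`. It transfers
identities between formal power series to identities between real numbers. -/
def EvalsTo (x : ℝ) (f : PowerSeries ℝ) (v : ℝ) : Prop :=
  (∀ n, 0 ≤ PowerSeries.coeff n f) ∧ HasSum (fun n => PowerSeries.coeff n f * x ^ n) v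

lemma EvalsTo.one (x : ℝ) : EvalsTo x 1 1 := by
  refine ⟨fun n => ?_, ?_⟩
  · rw [PowerSeries.coeff_one]; split_ifs <;> simp
  · convert hasSum_single (f := fun n => PowerSeries.coeff n (1 : PowerSeries ℝ) * x ^ n) 0 ?_
    · simp
    · intro n hn
      simp [PowerSeries.coeff_one, hn]

lemma EvalsTo.mul {x v w : ℝ} {f g : PowerSeries ℝ} (hf : EvalsTo x f v)
    (hg : EvalsTo x g w) : EvalsTo x (f * g) (v * w) := by
  refine ⟨fun n => ?_, ?_⟩
  · rw [PowerSeries.coeff_mul]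
    exact Finset.sum_nonneg fun p _ => mul_nonneg (hf.1 _) (hg.1 _)
  · have hfn : Summable fun n => ‖PowerSeries.coeff n f * x ^ n‖ := hf.2.summable.norm
    have hgn : Summable fun n => ‖PowerSeries.coeff n g * x ^ n‖ := hg.2.summable.norm
    have h1 := tsum_mul_tsum_eq_tsum_sum_antidiagonal_of_summable_norm hfn hgn
    have h2 := (summable_norm_sum_mul_antidiagonal_of_summable_norm hfn hgn).of_norm
    rw [hf.2.tsum_eq, hg.2.tsum_eq] at h1
    have e : (fun n => PowerSeries.coeff n (f * g) * x ^ n) = fun n =>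
        ∑ kl ∈ Finset.HasAntidiagonal.antidiagonal n,
          (PowerSeries.coeff kl.1 f * x ^ kl.1) * (PowerSeries.coeff kl.2 g * x ^ kl.2) := by
      funext n
      rw [PowerSeries.coeff_mul, Finset.sum_mul]
      refine Finset.sum_congr rfl fun kl hkl => ?_
      rw [← Finset.HasAntidiagonal.mem_antidiagonal.mp hkl, pow_add]
      ring
    rw [h1, e]
    exact h2.hasSum

open PowerSeries.WithPiTopology in
lemma EvalsTo.geom {x : ℝ} (hx0 : 0 ≤ x) (hx1 : x < 1) {m : ℕ} (hm : 0 < m) :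
    EvalsTo x (∑' j : ℕ, (PowerSeries.X : PowerSeries ℝ) ^ (m * j)) (1 - x ^ m)⁻¹ := by
  have hsum : Summable fun j : ℕ => (PowerSeries.X : PowerSeries ℝ) ^ (m * j) := by
    simp_rw [pow_mul]
    exact summable_pow_of_constantCoeff_eq_zero (by simp [hm.ne'])
  have hcoeff : ∀ n, PowerSeries.coeff n (∑' j : ℕ, (PowerSeries.X : PowerSeries ℝ) ^ (m * j))
      = if m ∣ n then 1 else 0 := by
    intro n
    have h1 := (PowerSeries.WithPiTopology.hasSum_iff_hasSum_coeff ℝ).mp hsum.hasSum n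
    rw [← h1.tsum_eq]
    simp_rw [PowerSeries.coeff_X_pow]
    split_ifs with h
    · obtain ⟨k, rfl⟩ := h
      rw [tsum_eq_single k]
      · simp
      · intro j hj
        rw [if_neg]
        intro h2
        exact hj (Nat.eq_of_mul_eq_mul_left hm h2).symm
    · convert tsum_zero with j
      rw [if_neg]
      rintro rfl
      exact h (dvd_mul_right _ _)
  refine ⟨fun n => ?_, ?_⟩
  · rw [hcoeff]; split_ifs <;> simp
  · simp_rw [hcoeff]
    have hinj : Function.Injective fun j : ℕ => m * j := fun a b h => Nat.eq_of_mul_eq_mul_left hm h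
    rw [← hinj.hasSum_iff]
    · have h2 := hasSum_geometric_of_lt_one (pow_nonneg hx0 m) (pow_lt_one₀ hx0 hx1 hm.ne')
      convert h2 using 1
      ext j
      simp [pow_mul]
    · intro n hn
      rw [if_neg, zero_mul]
      rintro ⟨k, rfl⟩
      exact hn ⟨k, rfl⟩

lemma EvalsTo.prod {x : ℝ} {f : ℕ → PowerSeries ℝ} {v : ℕ → ℝ}
    (h : ∀ i, EvalsTo x (f i) (v i)) (N : ℕ) :
    EvalsTo x (∏ i ∈ Finset.range N, f i) (∏ i ∈ Finset.range N, v i) := by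
  induction N with
  | zero => simpa using EvalsTo.one x
  | succ N ih => rw [Finset.prod_range_succ, Finset.prod_range_succ]; exact ih.mul (h N)

open Classical in
open PowerSeries.WithPiTopology in
/-- Euler's product for partitions into parts from a finite set. -/
lemma hasSum_pA_truncate (A : Set ℕ) (N : ℕ) {x : ℝ} (hx0 : 0 ≤ x) (hx1 : x < 1) :
    HasSum (fun n : ℕ => (pA (A ∩ Set.Iic N) n : ℝ) * x ^ n)
      (∏ i ∈ Finset.range N, if i + 1 ∈ A then (1 - x ^ (i + 1))⁻¹ else 1) := by
  have hprod := Nat.Partition.powerSeriesMk_card_restricted_eq_tprod ℝ (· ∈ A ∩ Set.Iic N)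
  rw [tprod_eq_prod (s := Finset.range N)] at hprod
  · have hE := EvalsTo.prod (x := x)
      (f := fun i => if i + 1 ∈ A then
        ∑' j : ℕ, (PowerSeries.X : PowerSeries ℝ) ^ ((i + 1) * j) else 1)
      (v := fun i => if i + 1 ∈ A then (1 - x ^ (i + 1))⁻¹ else 1) (fun i => by
        split_ifs
        · exact EvalsTo.geom hx0 hx1 (Nat.succ_pos i)
        · exact EvalsTo.one x) N
    have e : ∏ i ∈ Finset.range N, (if i + 1 ∈ A then
        ∑' j : ℕ, (PowerSeries.X : PowerSeries ℝ) ^ ((i + 1) * j) else 1)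
        = PowerSeries.mk fun n => ((Nat.Partition.restricted n (· ∈ A ∩ Set.Iic N)).card : ℝ) := by
      rw [hprod]
      refine Finset.prod_congr rfl fun i hi => ?_
      have : i + 1 ≤ N := Finset.mem_range.mp hi
      simp [this]
    rw [e] at hE
    convert hE.2 using 3 with n
    rw [PowerSeries.coeff_mk]
    congr 1
    unfold pA Nat.Partition.restricted
    rw [Nat.card_eq_fintype_card, Fintype.card_subtype]
  · intro i hi
    rw [Finset.mem_range, not_lt] at hi
    rw [if_neg]
    rintro ⟨_, h⟩
    have : i + 1 ≤ N := h
    omega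

open Classical in
/-- The indicator function of `A`. -/
noncomputable def ind (A : Set ℕ) (n : ℕ) : ℝ := if n ∈ A then 1 else 0

lemma ind_nonneg (A : Set ℕ) (n : ℕ) : 0 ≤ ind A n := by unfold ind; split_ifs <;> simp

lemma ind_le_one (A : Set ℕ) (n : ℕ) : ind A n ≤ 1 := by unfold ind; split_ifs <;> simp

/-- The double series `∑ i k, ind A (i + 1) exp (-((i + 1) (k + 1) t)) / (k + 1)`, obtained by
expanding the logarithm of Euler's product, converges absolutely. -/
lemma summable_log_double (A : Set ℕ) {t : ℝ} (ht : 0 < t) :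
    Summable fun q : ℕ × ℕ => ind A (q.1 + 1) *
      (Real.exp (-((q.1 + 1 : ℕ) * t)) ^ (q.2 + 1) / (q.2 + 1)) := by
  have hx : Real.exp (-t) < 1 := by simpa using ht
  have hg := summable_geometric_of_lt_one (Real.exp_pos (-t)).le hx
  refine Summable.of_nonneg_of_le (fun q => ?_) (fun q => ?_)
    (hg.mul_of_nonneg hg (fun _ => by positivity) (fun _ => by positivity))
  · have := ind_nonneg A (q.1 + 1)
    positivity
  · rw [exp_neg_nat_mul, ← pow_mul, ← pow_add]
    have h1 : Real.exp (-t) ^ ((q.1 + 1) * (q.2 + 1)) ≤ Real.exp (-t) ^ (q.1 + q.2) :=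
      pow_le_pow_of_le_one (Real.exp_pos _).le hx.le (by nlinarith)
    have h2 : Real.exp (-t) ^ ((q.1 + 1) * (q.2 + 1)) / ((q.2 : ℝ) + 1)
        ≤ Real.exp (-t) ^ ((q.1 + 1) * (q.2 + 1)) :=
      div_le_self (by positivity) (by linarith [(Nat.cast_nonneg q.2 : (0 : ℝ) ≤ q.2)])
    calc _ ≤ 1 * (Real.exp (-t) ^ ((q.1 + 1) * (q.2 + 1)) / ((q.2 : ℝ) + 1)) := by
          gcongr
          exact ind_le_one _ _
      _ ≤ _ := by linarith

lemma hasSum_neg_log {t : ℝ} (ht : 0 < t) (i : ℕ) :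
    HasSum (fun k : ℕ => Real.exp (-((i + 1 : ℕ) * t)) ^ (k + 1) / ((k : ℝ) + 1))
      (-Real.log (1 - Real.exp (-((i + 1 : ℕ) * t)))) := by
  refine Real.hasSum_pow_div_log_of_abs_lt_one ?_
  rw [abs_of_pos (Real.exp_pos _), Real.exp_lt_one_iff]
  have : 0 < ((i + 1 : ℕ) : ℝ) * t := by positivity
  linarith

lemma double_term (A : Set ℕ) (t : ℝ) (i k : ℕ) :
    ind A (i + 1) * (Real.exp (-((i + 1 : ℕ) * t)) ^ (k + 1) / ((k : ℝ) + 1))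
      = ((k + 1 : ℕ) : ℝ)⁻¹ *
        (ind A (i + 1) * Real.exp (-((i + 1 : ℕ) * ((k + 1 : ℕ) * t)))) := by
  have e : Real.exp (-((i + 1 : ℕ) * t)) ^ (k + 1)
      = Real.exp (-((i + 1 : ℕ) * ((k + 1 : ℕ) * t))) := by
    rw [← Real.exp_nat_mul]
    congr 1
    ring
  rw [e, div_eq_inv_mul, Nat.cast_succ k]
  ring

lemma double_sum_swap {A : Set ℕ} (hA : ∀ a ∈ A, 0 < a) {t : ℝ} (ht : 0 < t) :
    ∑' i : ℕ, ∑' k : ℕ, ind A (i + 1) *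
      (Real.exp (-((i + 1 : ℕ) * t)) ^ (k + 1) / ((k : ℝ) + 1))
      = ∑' k : ℕ+, (k : ℝ)⁻¹ * ∑' n : ℕ, ind A n * Real.exp (-(n * (k * t))) := by
  have hd := summable_log_double A ht
  have h0 : ind A 0 = 0 := if_neg fun h => (hA 0 h).false
  have hcomm := Summable.tsum_comm (f := fun k i : ℕ => ind A (i + 1) *
      (Real.exp (-((i + 1 : ℕ) * t)) ^ (k + 1) / ((k : ℝ) + 1))) hd.prod_symm
  rw [hcomm, tsum_pnat_eq_tsum_succ
    (f := fun k : ℕ => (k : ℝ)⁻¹ * ∑' n : ℕ, ind A n * Real.exp (-(n * (k * t))))]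
  refine tsum_congr fun k => ?_
  have h1 := hd.prod_symm.prod_factor k
  have e : (fun i : ℕ => ind A (i + 1) *
      (Real.exp (-((i + 1 : ℕ) * t)) ^ (k + 1) / ((k : ℝ) + 1))) = fun i : ℕ =>
      ((k + 1 : ℕ) : ℝ)⁻¹ * (ind A (i + 1) * Real.exp (-((i + 1 : ℕ) * ((k + 1 : ℕ) * t)))) :=
    funext fun i => double_term A t i k
  have h1' : Summable (fun i : ℕ => ind A (i + 1) *
      (Real.exp (-((i + 1 : ℕ) * t)) ^ (k + 1) / ((k : ℝ) + 1))) := h1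
  rw [e] at h1' ⊢
  have hk : ((k + 1 : ℕ) : ℝ)⁻¹ ≠ 0 := by positivity
  have hrow := (summable_mul_left_iff hk).mp h1'
  rw [tsum_mul_left]
  congr 1
  symm
  have h2 := ((summable_nat_add_iff
    (f := fun n : ℕ => ind A n * Real.exp (-(n * ((k + 1 : ℕ) * t)))) 1).mp hrow).tsum_eq_zero_add
  rw [h2, h0, zero_mul, zero_add]

/-- The logarithm of Euler's product `F(t) = ∏ a ∈ A, (1 - exp (-(a t)))⁻¹`, with each factor
expanded and the summations interchanged. Euler's product for infinite `A` is reached through the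
truncations `A ∩ [0, N]`, whose generating functions lie between the partial sums of `F` and `F`. -/
lemma laplace_pA {A : Set ℕ} (hA : ∀ a ∈ A, 0 < a) {t : ℝ} (ht : 0 < t) :
    Summable (fun n : ℕ => (pA A n : ℝ) * Real.exp (-(n * t))) ∧
    Real.log (∑' n : ℕ, (pA A n : ℝ) * Real.exp (-(n * t))) =
      ∑' k : ℕ+, (k : ℝ)⁻¹ * ∑' n : ℕ, ind A n * Real.exp (-(n * (k * t))) := by
  classical
  set x := Real.exp (-t) with hx
  have hx0 : 0 ≤ x := (Real.exp_pos _).le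
  have hx1 : x < 1 := by rw [hx]; simpa using ht
  have hdouble := summable_log_double A ht
  set g : ℕ → ℝ := fun i => ind A (i + 1) * -Real.log (1 - Real.exp (-((i + 1 : ℕ) * t))) with hg
  have hrow : ∀ i : ℕ, ∑' k : ℕ, ind A (i + 1) *
      (Real.exp (-((i + 1 : ℕ) * t)) ^ (k + 1) / ((k : ℝ) + 1)) = g i := fun i => by
    rw [tsum_mul_left, (hasSum_neg_log ht i).tsum_eq]
  have hgs : HasSum g (∑' i : ℕ, ∑' k : ℕ, ind A (i + 1) *
      (Real.exp (-((i + 1 : ℕ) * t)) ^ (k + 1) / ((k : ℝ) + 1))) := by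
    simp_rw [hrow]
    have := hdouble.prod
    simp_rw [hrow] at this
    exact this.hasSum
  have hswap := double_sum_swap hA ht
  rw [hswap] at hgs
  set S := ∑' k : ℕ+, (k : ℝ)⁻¹ * ∑' n : ℕ, ind A n * Real.exp (-(n * (k * t)))
  have hg0 : ∀ i, 0 ≤ g i := fun i =>
    mul_nonneg (ind_nonneg _ _) ((hasSum_neg_log ht i).nonneg fun k => by positivity)
  have hP : ∀ N, (∏ i ∈ Finset.range N, if i + 1 ∈ A then (1 - x ^ (i + 1))⁻¹ else 1)
      = Real.exp (∑ i ∈ Finset.range N, g i) := by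
    intro N
    rw [Real.exp_sum]
    refine Finset.prod_congr rfl fun i _ => ?_
    simp only [hg, ind]
    split_ifs
    · rw [one_mul, Real.exp_neg, Real.exp_log, exp_neg_nat_mul]
      rw [exp_neg_nat_mul, sub_pos]
      exact pow_lt_one₀ hx0 hx1 (Nat.succ_ne_zero i)
    · simp
  have hE := fun N => hasSum_pA_truncate A N hx0 hx1
  simp_rw [hP] at hE
  simp_rw [exp_neg_nat_mul, ← hx]
  have hpart : ∀ N, ∑ n ∈ Finset.range N, (pA A n : ℝ) * x ^ n
      ≤ Real.exp (∑ i ∈ Finset.range N, g i) := by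
    intro N
    have : ∑ n ∈ Finset.range N, (pA A n : ℝ) * x ^ n
        = ∑ n ∈ Finset.range N, (pA (A ∩ Set.Iic N) n : ℝ) * x ^ n :=
      Finset.sum_congr rfl fun n hn => by rw [pA_truncate A (Finset.mem_range.mp hn).le]
    rw [this]
    exact sum_le_hasSum _ (fun _ _ => by positivity) (hE N)
  have hle : ∀ N, ∑ i ∈ Finset.range N, g i ≤ S := fun N =>
    sum_le_hasSum _ (fun i _ => hg0 i) hgs
  have hsumm : Summable fun n : ℕ => (pA A n : ℝ) * x ^ n :=
    summable_of_sum_range_le (c := Real.exp S) (fun _ => by positivity) fun N =>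
      (hpart N).trans (Real.exp_le_exp.mpr (hle N))
  refine ⟨hsumm, ?_⟩
  have hF : ∑' n : ℕ, (pA A n : ℝ) * x ^ n = Real.exp S := by
    refine le_antisymm ?_ ?_
    · exact hsumm.tsum_le_of_sum_range_le fun N =>
        (hpart N).trans (Real.exp_le_exp.mpr (hle N))
    · have hlim := (Real.continuous_exp.tendsto S).comp hgs.tendsto_sum_nat
      refine le_of_tendsto' hlim fun N => ?_
      simp only [Function.comp]
      rw [← (hE N).tsum_eq]
      refine Summable.tsum_le_tsum (fun n => ?_) (hE N).summable hsumm
      have : (pA (A ∩ Set.Iic N) n : ℝ) ≤ pA A n := by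
        exact_mod_cast pA_mono_set Set.inter_subset_left n
      gcongr
  rw [hF, Real.log_exp]

/-! ### Density in terms of generating functions -/

lemma countA_eq_sum_ind (A : Set ℕ) {x : ℝ} (hx : 0 ≤ x) :
    (countA A x : ℝ) = ∑ n ∈ Finset.range (⌊x⌋₊ + 1), ind A n := by
  classical
  have h : {a : ℕ | a ∈ A ∧ (a : ℝ) ≤ x}
      = ((Finset.range (⌊x⌋₊ + 1)).filter (· ∈ A) : Finset ℕ) := by
    ext a
    simp [Nat.le_floor_iff hx, and_comm]
  unfold countA ind
  rw [h, Set.ncard_coe_finset, Finset.sum_boole]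

lemma density_iff_tendsto_nat (A : Set ℕ) (α : ℝ) :
    Tendsto (fun x : ℝ => (countA A x : ℝ) / x) atTop (nhds α) ↔
      Tendsto (fun N : ℕ => (∑ n ∈ Finset.range (N + 1), ind A n) / N) atTop (nhds α) := by
  constructor
  · intro h
    refine (h.comp tendsto_natCast_atTop_atTop).congr fun N => ?_
    simp only [Function.comp]
    rw [countA_eq_sum_ind A N.cast_nonneg, Nat.floor_natCast]
  · intro h
    have h1 := (h.comp tendsto_nat_floor_atTop (α := ℝ)).mul (tendsto_nat_floor_div_atTop (R := ℝ))
    rw [mul_one] at h1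
    refine h1.congr' ?_
    filter_upwards [eventually_ge_atTop 1] with x hx
    have hf : (⌊x⌋₊ : ℝ) ≠ 0 := by
      exact_mod_cast (Nat.floor_pos.mpr hx).ne'
    simp only [Function.comp]
    rw [countA_eq_sum_ind A (by linarith)]
    field_simp

lemma density_iff_balanced (A : Set ℕ) (α : ℝ) :
    Tendsto (fun x : ℝ => (countA A x : ℝ) / x) atTop (nhds α) ↔
      Tendsto (fun N : ℕ => (∑ n ∈ Finset.range (N + 1), (ind A n - α)) / N) atTop (nhds 0) := by
  rw [density_iff_tendsto_nat]
  have h1 : Tendsto (fun N : ℕ => α * (1 + 1 / (N : ℝ))) atTop (nhds α) := by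
    simpa using (tendsto_one_div_atTop_nhds_zero_nat (𝕜 := ℝ)).const_add 1 |>.const_mul α
  have e : ∀ᶠ N : ℕ in atTop, (∑ n ∈ Finset.range (N + 1), (ind A n - α)) / (N : ℝ)
      = (∑ n ∈ Finset.range (N + 1), ind A n) / N - α * (1 + 1 / (N : ℝ)) := by
    filter_upwards [eventually_gt_atTop 0] with N hN
    have : (N : ℝ) ≠ 0 := by positivity
    rw [Finset.sum_sub_distrib, Finset.sum_const, Finset.card_range, nsmul_eq_mul]
    field_simp
    push_cast
    ring
  rw [tendsto_congr' e]
  constructor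
  · intro h
    simpa using h.sub h1
  · intro h
    simpa using h.add h1

lemma abs_ind_le (A : Set ℕ) (n : ℕ) : |ind A n| ≤ 1 := by
  rw [abs_of_nonneg (ind_nonneg A n)]; exact ind_le_one A n

lemma tendsto_mul_inv_one_sub_exp :
    Tendsto (fun t : ℝ => t * (1 - Real.exp (-t))⁻¹) (nhdsWithin 0 (Set.Ioi 0)) (nhds 1) := by
  have h : Tendsto (fun t : ℝ => 1 + t) (nhdsWithin 0 (Set.Ioi 0)) (nhds 1) := by
    have : Tendsto (fun t : ℝ => 1 + t) (nhds 0) (nhds (1 + 0)) :=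
      Continuous.tendsto (by fun_prop) _
    rw [add_zero] at this
    exact this.mono_left nhdsWithin_le_nhds
  refine tendsto_of_tendsto_of_tendsto_of_le_of_le' tendsto_const_nhds h ?_ ?_
  · filter_upwards [self_mem_nhdsWithin] with t ht
    have ht' : (0 : ℝ) < t := ht
    rw [← div_eq_mul_inv, le_div_iff₀ (one_sub_exp_neg_pos ht')]
    linarith [Real.add_one_le_exp (-t)]
  · filter_upwards [self_mem_nhdsWithin] with t ht
    exact mul_inv_one_sub_exp_le ht

/-- Abel's theorem and Karamata's theorem, applied to the balanced sequence `ind A n - α`. -/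
lemma density_iff_laplace (A : Set ℕ) {α : ℝ} (hα : 0 < α) :
    Tendsto (fun x : ℝ => (countA A x : ℝ) / x) atTop (nhds α) ↔
      Tendsto (fun t : ℝ => t * ∑' n : ℕ, ind A n * Real.exp (-(n * t)) - α)
        (nhdsWithin 0 (Set.Ioi 0)) (nhds 0) := by
  have hb : ∀ n, |ind A n - α| ≤ 1 + α := fun n => by
    have h1 := ind_nonneg A n
    have h2 := ind_le_one A n
    rw [abs_le]; constructor <;> linarith
  rw [density_iff_balanced]
  refine Iff.trans ⟨abel_bounded hb, karamata_bounded hb⟩ ?_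
  have hα1 : Tendsto (fun t : ℝ => α * (t * (1 - Real.exp (-t))⁻¹ - 1))
      (nhdsWithin 0 (Set.Ioi 0)) (nhds 0) := by
    simpa using (tendsto_mul_inv_one_sub_exp.sub_const 1).const_mul α
  have e : ∀ᶠ t in nhdsWithin (0 : ℝ) (Set.Ioi 0),
      t * ∑' n : ℕ, (ind A n - α) * Real.exp (-(n * t))
      = (t * ∑' n : ℕ, ind A n * Real.exp (-(n * t)) - α)
        - α * (t * (1 - Real.exp (-t))⁻¹ - 1) := by
    filter_upwards [self_mem_nhdsWithin] with t ht
    have ht' : (0 : ℝ) < t := ht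
    have hc : Summable fun n : ℕ => α * Real.exp (-(n * t)) :=
      summable_bdd_exp (b := fun _ => α) (M := |α|) (fun _ => le_rfl) ht'
    simp_rw [sub_mul]
    rw [(summable_bdd_exp (abs_ind_le A) ht').tsum_sub hc, tsum_mul_left, tsum_exp_neg ht']
    ring
  rw [tendsto_congr' e]
  constructor
  · intro h
    simpa using h.add hα1
  · intro h
    simpa using h.sub hα1

lemma mul_tsum_ind_le_one {A : Set ℕ} (hA : ∀ a ∈ A, 0 < a) {t : ℝ} (ht : 0 < t) :
    t * ∑' n : ℕ, ind A n * Real.exp (-(n * t)) ≤ 1 := by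
  have h0 : ind A 0 = 0 := if_neg fun h => (hA 0 h).false
  have hs := summable_bdd_exp (abs_ind_le A) ht
  have hone := summable_bdd_exp (b := fun _ => 1) (M := 1) (fun _ => by simp) ht
  simp only [one_mul] at hone
  have h1 : ∑' n : ℕ, ind A n * Real.exp (-(n * t))
      ≤ ∑' n : ℕ, Real.exp (-((n + 1 : ℕ) * t)) := by
    rw [hs.tsum_eq_zero_add, h0, zero_mul, zero_add]
    refine Summable.tsum_le_tsum (fun n => ?_) ((summable_nat_add_iff 1).mpr hs)
      ((summable_nat_add_iff 1).mpr hone)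
    exact mul_le_of_le_one_left (Real.exp_pos _).le (ind_le_one _ _)
  have h2 : ∑' n : ℕ, Real.exp (-((n + 1 : ℕ) * t)) = (1 - Real.exp (-t))⁻¹ - 1 := by
    rw [← tsum_exp_neg ht, hone.tsum_eq_zero_add]
    simp
  have h3 := mul_inv_one_sub_exp_le ht
  rw [h2] at h1
  calc _ ≤ t * ((1 - Real.exp (-t))⁻¹ - 1) := by gcongr
    _ ≤ 1 := by linarith

lemma hasSum_pnat_inv_sq : HasSum (fun k : ℕ+ => ((k : ℝ) ^ 2)⁻¹) (π ^ 2 / 6) := by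
  have h := hasSum_zeta_two
  have hs := summable_pnat_inv_sq
  convert hs.hasSum using 1
  rw [tsum_pnat_eq_tsum_succ (f := fun k : ℕ => ((k : ℝ) ^ 2)⁻¹)]
  rw [← h.tsum_eq, h.summable.tsum_eq_zero_add]
  simp

/-- The dilated deviations of the Laplace transform of `A`, weighted by `k⁻²`, add up to the
deviation of `t * log F(t)`, where `F` is the generating function of `pA A`. -/
lemma tsum_dilates_eq {A : Set ℕ} (hA : ∀ a ∈ A, 0 < a) {α t : ℝ} (ht : 0 < t) :
    ∑' k : ℕ+, ((k * t) * ∑' n : ℕ, ind A n * Real.exp (-(n * (k * t))) - α) * ((k : ℝ) ^ 2)⁻¹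
      = t * Real.log (∑' n : ℕ, (pA A n : ℝ) * Real.exp (-(n * t))) - α * (π ^ 2 / 6) := by
  have hk : ∀ k : ℕ+, 0 < (k : ℝ) * t := fun k =>
    mul_pos (by exact_mod_cast k.pos) ht
  have hs : Summable fun k : ℕ+ =>
      ((k * t) * ∑' n : ℕ, ind A n * Real.exp (-(n * (k * t)))) * ((k : ℝ) ^ 2)⁻¹ := by
    refine Summable.of_nonneg_of_le (fun k => ?_) (fun k => ?_) summable_pnat_inv_sq
    · have := hk k
      have h2 : 0 ≤ ∑' n : ℕ, ind A n * Real.exp (-(n * (k * t))) :=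
        tsum_nonneg fun n => mul_nonneg (ind_nonneg _ _) (Real.exp_pos _).le
      positivity
    · exact mul_le_of_le_one_left (by positivity) (mul_tsum_ind_le_one hA (hk k))
  simp_rw [sub_mul]
  rw [hs.tsum_sub (summable_pnat_inv_sq.mul_left α), tsum_mul_left, hasSum_pnat_inv_sq.tsum_eq,
    (laplace_pA hA ht).2, ← tsum_mul_left]
  congr 1
  refine tsum_congr fun k => ?_
  have : (k : ℝ) ≠ 0 := by exact_mod_cast k.ne_zero
  field_simp

/-- `α (π² / 6)` is the value of `∑ k, D (k t) / k²` for the constant `D = α`, so that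
`tendsto_dilates_iff` applies to the deviation of the Laplace transform of `A` from `α`. -/
lemma density_iff_log_generating {A : Set ℕ} (hA : ∀ a ∈ A, 0 < a) {α : ℝ} (hα : 0 < α) :
    Tendsto (fun x : ℝ => (countA A x : ℝ) / x) atTop (nhds α) ↔
      Tendsto (fun t : ℝ => t * Real.log (∑' n : ℕ, (pA A n : ℝ) * Real.exp (-(n * t))))
        (nhdsWithin 0 (Set.Ioi 0)) (nhds (α * (π ^ 2 / 6))) := by
  rw [density_iff_laplace A hα]
  rw [tendsto_dilates_iff (M := 1 + α)]
  · rw [← tendsto_sub_nhds_zero_iff (x := α * (π ^ 2 / 6))]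
    refine tendsto_congr' ?_
    filter_upwards [self_mem_nhdsWithin] with t ht
    exact tsum_dilates_eq hA ht
  · intro t ht
    have h1 := mul_tsum_ind_le_one hA ht
    have h2 : 0 ≤ t * ∑' n : ℕ, ind A n * Real.exp (-(n * t)) :=
      mul_nonneg ht.le (tsum_nonneg fun n => mul_nonneg (ind_nonneg _ _) (Real.exp_pos _).le)
    rw [abs_le]; constructor <;> linarith

theorem density_iff_partition_asymptotics (A : Set ℕ) (hA : ∀ a ∈ A, 0 < a)
    (hgcd : ∀ d : ℕ, (∀ a ∈ A, d ∣ a) → d = 1) (α : ℝ) (hα : 0 < α) :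
    Tendsto (fun x : ℝ => (countA A x : ℝ) / x) atTop (nhds α) ↔
      (fun n : ℕ => Real.log (pA A n)) ~[atTop]
        (fun n : ℕ => Real.pi * Real.sqrt (2 / 3) * Real.sqrt (α * n)) := by
  obtain ⟨N₀, hmono⟩ := pA_quasi_mono hA hgcd
  have hs : ∀ t > 0, Summable fun n : ℕ => (pA A n : ℝ) * Real.exp (-(n * t)) :=
    fun t ht => (laplace_pA hA ht).1
  have hC : 0 < α * (π ^ 2 / 6) := by positivity
  rw [density_iff_log_generating hA hα]
  refine Iff.trans ⟨tauber (pA_zero A) hmono hs hC, abel_partition (pA_zero A) hmono hs hC⟩ ?_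
  -- The constant: `π √(2/3) √α = 2 √(α π² / 6)`.
  have hconst : Real.pi * Real.sqrt (2 / 3) * Real.sqrt α = 2 * √(α * (π ^ 2 / 6)) := by
    have e : α * (π ^ 2 / 6) = (π / 2) ^ 2 * (2 / 3 * α) := by ring
    rw [e, Real.sqrt_mul (by positivity), Real.sqrt_sq (by positivity),
      Real.sqrt_mul (by positivity)]
    ring
  have hR : ∀ n : ℕ, Real.pi * Real.sqrt (2 / 3) * Real.sqrt (α * n)
      = 2 * √(α * (π ^ 2 / 6)) * √n := fun n => by
    rw [Real.sqrt_mul hα.le, ← mul_assoc, hconst]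
  simp_rw [hR]
  have hc : 2 * √(α * (π ^ 2 / 6)) ≠ 0 := by positivity
  set c := 2 * √(α * (π ^ 2 / 6))
  rw [isEquivalent_iff_tendsto_one]
  · constructor
    · intro h
      have h1 := h.div_const c
      rw [div_self hc] at h1
      refine h1.congr fun n => ?_
      rw [Pi.div_apply, div_div, mul_comm]
    · intro h
      have h1 := h.const_mul c
      rw [mul_one] at h1
      refine h1.congr fun n => ?_
      rw [Pi.div_apply, mul_div_assoc', mul_div_mul_left _ _ hc]
  · filter_upwards [eventually_gt_atTop 0] with n hn
    have : 0 < √(n : ℝ) := by positivity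
    exact mul_ne_zero hc this.ne'
end

section
/- Let A be an infinite set of positive integers with gcd(A) = 1. If the lower asymptotic density of A satisfies d_L(A) ≥ α, then liminf_{n→∞} (log p_A(n))/(c₀√n) ≥ √α, where c₀ = π√(2/3). -/
/-!
The proof compares partitions with parts in `A` to ordinary partitions with large parts, and counts
the latter with a saddle-point argument using only finite sums.

*Reduction.* Let `a₀ < a₁ < …` enumerate `A`. Lower density at least `α` means that for every
`β < α` one has `a_k ≤ (k + 1) / β` for all `k ≥ k₀` (`nth_le_of_density`). Since `gcd A = 1`, a
finite set `F ⊆ A` represents every integer `≥ m₀` (`exists_finite_gen`). A partition of an integer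
at most `n - m₀` into parts `a_k ∉ F` can be completed by parts in `F` to a partition of `n`, and it
can be recovered from the result (`card_le_pA`). Replacing each part `k + 1` by `a_k`, it follows
that `p_A(n)` is at least the number of partitions of integers `≤ β (n - m₀)` into parts `> k₀`
(`log_pA_ge`).

*Counting.* The partitions with parts `≥ K` of integers `≤ x` number at least
`exp ((1 - o(1)) c₀ √x)` (`exists_count_ge_sqrt`). Put `E = π² / 6`. The generating function
`Z(t) = ∑ e^{-t |λ|}` is at most `e^{E / t}` (`Z_le`) and at least `e^{(1 - o(1)) E / t}` as `t → 0`
(`exists_Z_ge`), as one sees by expanding the logarithm of the Euler product and using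
`∑ 1 / j² = E`. Exponential tilting (`tail_le`) then shows that partitions with `|λ|` outside
`(1 ± δ) E / t²` carry a negligible part of `Z(t)`, so the others number at least
`e^{(1 - δ) E / t} Z(t) / 2`, which is `e^{(2 - O(δ)) E / t}` (`exists_count_ge`). Choosing `t` with
`(1 + δ) E / t² = x` gives the claim, because `c₀ = 2 √E`.

The same generating function yields `log p_A(n) = O(√n)` (`pA_le`), which is needed for the `liminf`
of real numbers not to take its default value.
-/

open Filter Asymptotics Real

open scoped Topology

/-! ### The generating function of partitions into large parts -/

/-- The weight `∑ (K + i) fᵢ`: a vector `f` of multiplicities encodes a partition with parts in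
`{K, …, K + L - 1}`, and `wt K f` is the number being partitioned. -/
def wt (K : ℕ) {L : ℕ} (f : Fin L → ℕ) : ℕ := ∑ i : Fin L, (K + i) * f i

/-- The box of multiplicity vectors with all multiplicities below `J`. -/
def box (L J : ℕ) : Finset (Fin L → ℕ) := Fintype.piFinset fun _ => Finset.range J

/-- The partition function `∑ exp (-t · wt f)` of the Boltzmann distribution on the box. -/
noncomputable def Z (K L J : ℕ) (t : ℝ) : ℝ := ∑ f ∈ box L J, exp (-t * wt K f)

lemma Z_eq_prod (K L J : ℕ) (t : ℝ) :
    Z K L J t = ∏ i : Fin L, ∑ j ∈ Finset.range J, exp (-t * (K + i)) ^ j := by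
  rw [Z, box, Finset.prod_univ_sum]
  refine Finset.sum_congr rfl fun f _ => ?_
  simp_rw [← exp_nat_mul]
  rw [← exp_sum]
  congr 1
  simp only [wt]
  push_cast
  rw [Finset.mul_sum]
  exact Finset.sum_congr rfl fun i _ => by ring

/-- Series for the logarithm of `∏ 1 / (1 - e^{-t(K+i)})`, the limit of `Z K L J t` as `J → ∞`:
expand each `-log (1 - y)` and exchange the sums. -/
lemma hasSum_log (K L : ℕ) (hK : 1 ≤ K) (t : ℝ) (ht : 0 < t) :
    HasSum (fun j : ℕ => (∑ i : Fin L, exp (-t * (K + i)) ^ (j + 1)) / ((j : ℝ) + 1))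
      (∑ i : Fin L, -log (1 - exp (-t * (K + i)))) := by
  simp_rw [Finset.sum_div]
  refine hasSum_sum fun i _ => Real.hasSum_pow_div_log_of_abs_lt_one ?_
  rw [abs_of_pos (exp_pos _), exp_lt_one_iff]
  have : (1 : ℝ) ≤ K := by exact_mod_cast hK
  nlinarith [(Nat.cast_nonneg i.val : (0 : ℝ) ≤ i.val)]

/-- The inner sums of `hasSum_log` are geometric with ratio `e^{-t(j+1)}`. -/
lemma inner_eq (K L j : ℕ) (t : ℝ) :
    ∑ i : Fin L, exp (-t * (K + i)) ^ (j + 1) =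
      exp (-(t * (j + 1)) * K) * ∑ i ∈ Finset.range L, exp (-(t * (j + 1))) ^ i := by
  rw [Finset.mul_sum, ← Fin.sum_univ_eq_sum_range
    (fun i => exp (-(t * (j + 1)) * K) * exp (-(t * (j + 1))) ^ i)]
  refine Finset.sum_congr rfl fun i _ => ?_
  rw [← exp_nat_mul, ← exp_nat_mul, ← exp_add]
  congr 1
  push_cast
  ring

lemma inner_le (K L j : ℕ) (hK : 1 ≤ K) (t : ℝ) (ht : 0 < t) :
    ∑ i : Fin L, exp (-t * (K + i)) ^ (j + 1) ≤ 1 / (t * (j + 1)) := by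
  rw [inner_eq]
  set u := t * ((j : ℝ) + 1) with hu
  have hu0 : 0 < u := by positivity
  have hlt : exp (-u) < 1 := by rw [exp_lt_one_iff]; linarith
  have h1 : ∑ i ∈ Finset.range L, exp (-u) ^ i ≤ (1 - exp (-u))⁻¹ :=
    sum_le_hasSum _ (fun i _ => by positivity) (hasSum_geometric_of_lt_one (exp_pos _).le hlt)
  have h2 : exp (-u * K) ≤ exp (-u) := by
    apply exp_le_exp.2
    have : (1 : ℝ) ≤ K := by exact_mod_cast hK
    nlinarith
  have h3 : 0 < 1 - exp (-u) := by linarith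
  calc _ ≤ exp (-u) * (1 - exp (-u))⁻¹ := by gcongr
    _ ≤ 1 / u := by
      rw [← div_eq_mul_inv, div_le_div_iff₀ h3 hu0]
      have h4 : exp (-u) * exp u = 1 := by rw [← exp_add]; simp
      nlinarith [add_one_le_exp u, exp_pos (-u)]

lemma hasSum_zeta_shift : HasSum (fun j : ℕ => 1 / ((j : ℝ) + 1) ^ 2) (π ^ 2 / 6) := by
  have h := (hasSum_nat_add_iff' (f := fun n : ℕ => 1 / (n : ℝ) ^ 2) 1).2 hasSum_zeta_two
  simpa using h

/-- The logarithm of the Euler product is at most `∑ 1 / (t (j + 1)²) = π² / (6 t)`. -/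
lemma log_prod_le (K L : ℕ) (hK : 1 ≤ K) (t : ℝ) (ht : 0 < t) :
    ∑ i : Fin L, -log (1 - exp (-t * (K + i))) ≤ π ^ 2 / 6 / t := by
  refine hasSum_le (fun j => ?_) (hasSum_log K L hK t ht) (hasSum_zeta_shift.div_const t)
  calc _ ≤ 1 / (t * ((j : ℝ) + 1)) / ((j : ℝ) + 1) := by gcongr; exact inner_le K L j hK t ht
    _ = _ := by field_simp

lemma exp_log_prod (K L : ℕ) (hK : 1 ≤ K) (t : ℝ) (ht : 0 < t) :
    exp (∑ i : Fin L, -log (1 - exp (-t * (K + i)))) =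
      ∏ i : Fin L, (1 - exp (-t * (K + i)))⁻¹ := by
  rw [exp_sum]
  refine Finset.prod_congr rfl fun i _ => ?_
  rw [exp_neg, exp_log]
  rw [sub_pos, exp_lt_one_iff]
  have : (1 : ℝ) ≤ K := by exact_mod_cast hK
  nlinarith [(Nat.cast_nonneg i.val : (0 : ℝ) ≤ i.val)]

lemma hasSum_geom_factor (K L : ℕ) (hK : 1 ≤ K) (t : ℝ) (ht : 0 < t) (i : Fin L) :
    HasSum (fun j : ℕ => exp (-t * (K + i)) ^ j) (1 - exp (-t * (K + i)))⁻¹ := by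
  refine hasSum_geometric_of_lt_one (exp_pos _).le ?_
  rw [exp_lt_one_iff]
  have : (1 : ℝ) ≤ K := by exact_mod_cast hK
  nlinarith [(Nat.cast_nonneg i.val : (0 : ℝ) ≤ i.val)]

lemma Z_le (K L J : ℕ) (hK : 1 ≤ K) (t : ℝ) (ht : 0 < t) :
    Z K L J t ≤ exp (π ^ 2 / 6 / t) := by
  refine le_trans ?_ (exp_le_exp.2 (log_prod_le K L hK t ht))
  rw [Z_eq_prod, exp_log_prod K L hK t ht]
  exact Finset.prod_le_prod (fun i _ => by positivity) fun i _ =>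
    sum_le_hasSum _ (fun j _ => by positivity) (hasSum_geom_factor K L hK t ht i)

/-- `Z` is at least `exp (ρ / t)` for any `ρ < π² / 6`, provided that `t` is small and that the
truncations `L`, `J` are large enough. -/
lemma exists_Z_ge (K : ℕ) (hK : 1 ≤ K) (ρ : ℝ) (hρ : ρ < π ^ 2 / 6) :
    ∃ t₀ > 0, ∀ t, 0 < t → t < t₀ → ∃ L J, exp (ρ / t) ≤ Z K L J t := by
  obtain ⟨N, hN⟩ := (hasSum_zeta_shift.tendsto_sum_nat.eventually (lt_mem_nhds hρ)).exists
  set S := ∑ j ∈ Finset.range N, 1 / ((j : ℝ) + 1) ^ 2 with hS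
  have hden : (0 : ℝ) < K * N + 1 := by positivity
  refine ⟨(S - ρ) / (K * N + 1), div_pos (by linarith) hden, fun t ht htt => ?_⟩
  rw [lt_div_iff₀ hden] at htt
  have hlim : Tendsto (fun L : ℕ => ∑ j ∈ Finset.range N,
      (∑ i : Fin L, exp (-t * (K + i)) ^ (j + 1)) / ((j : ℝ) + 1)) atTop
      (𝓝 (∑ j ∈ Finset.range N,
        exp (-(t * (j + 1)) * K) * (1 - exp (-(t * ((j : ℝ) + 1))))⁻¹ / ((j : ℝ) + 1))) := by
    refine tendsto_finsetSum _ fun j _ => Tendsto.div_const ?_ _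
    simp_rw [inner_eq]
    refine Tendsto.const_mul _ (HasSum.tendsto_sum_nat (hasSum_geometric_of_lt_one (exp_pos _).le ?_))
    rw [exp_lt_one_iff]
    have : 0 < t * ((j : ℝ) + 1) := by positivity
    linarith
  have hlow : ρ / t < ∑ j ∈ Finset.range N,
        exp (-(t * (j + 1)) * K) * (1 - exp (-(t * ((j : ℝ) + 1))))⁻¹ / ((j : ℝ) + 1) := by
    calc ρ / t < S / t - K * N := by
          rw [div_lt_iff₀ ht, sub_mul, div_mul_cancel₀ _ ht.ne']; nlinarith
      _ = ∑ j ∈ Finset.range N, (1 / ((j : ℝ) + 1) ^ 2 / t - K) := by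
          rw [Finset.sum_sub_distrib, ← Finset.sum_div]; simp [hS, mul_comm]
      _ ≤ _ := by
          refine Finset.sum_le_sum fun j _ => ?_
          set v := (j : ℝ) + 1 with hv
          have hv0 : 0 < v := by positivity
          have hv1 : 1 ≤ v := by
            have : (0 : ℝ) ≤ j := Nat.cast_nonneg j
            linarith
          have hu0 : 0 < t * v := by positivity
          have hlt : exp (-(t * v)) < 1 := by rw [exp_lt_one_iff]; linarith
          have h1 : 1 / (t * v) ≤ (1 - exp (-(t * v)))⁻¹ := by
            rw [← one_div]
            apply one_div_le_one_div_of_le (by linarith)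
            linarith [add_one_le_exp (-(t * v))]
          have h2 : 1 / (t * v) - K ≤ exp (-(t * v) * K) * (1 - exp (-(t * v)))⁻¹ := by
            calc 1 / (t * v) - K = (-(t * v) * K + 1) * (1 / (t * v)) := by field_simp; ring
              _ ≤ exp (-(t * v) * K) * (1 / (t * v)) := by
                gcongr; exact add_one_le_exp _
              _ ≤ _ := by gcongr
          calc 1 / v ^ 2 / t - K ≤ 1 / v ^ 2 / t - K / v := by
                gcongr; exact div_le_self (Nat.cast_nonneg K) hv1
            _ = (1 / (t * v) - K) / v := by field_simp
            _ ≤ _ := by gcongr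
  obtain ⟨L, hL⟩ := (hlim.eventually (lt_mem_nhds hlow)).exists
  have hL' : exp (ρ / t) < ∏ i : Fin L, (1 - exp (-t * (K + i)))⁻¹ := by
    rw [← exp_log_prod K L hK t ht, exp_lt_exp]
    exact hL.trans_le (sum_le_hasSum _ (fun j _ => by positivity) (hasSum_log K L hK t ht))
  have hlim2 : Tendsto (fun J => Z K L J t) atTop
      (𝓝 (∏ i : Fin L, (1 - exp (-t * (K + i)))⁻¹)) := by
    simp_rw [Z_eq_prod]
    exact tendsto_finsetProd _ fun i _ => (hasSum_geom_factor K L hK t ht i).tendsto_sum_nat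
  obtain ⟨J, hJ⟩ := (hlim2.eventually (lt_mem_nhds hL')).exists
  exact ⟨L, J, hJ.le⟩

/-! ### Counting partitions into large parts -/

/-- Exponential tilting (Chernoff): the vectors of the box with `s * (wt f - m) ≥ 0` contribute at
most `exp (-s m) Z (t - s)` to `Z t`, which `Z_le` bounds further. Positive `s` gives the upper
tail, negative `s` the lower. -/
lemma tail_le (K L J : ℕ) (hK : 1 ≤ K) (t s m : ℝ) (hts : 0 < t - s) (p : (Fin L → ℕ) → Prop)
    [DecidablePred p] (hp : ∀ f, p f → 0 ≤ s * (wt K f - m)) :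
    ∑ f ∈ (box L J).filter p, exp (-t * wt K f) ≤ exp (-s * m + π ^ 2 / 6 / (t - s)) := by
  rw [exp_add]
  calc _ ≤ ∑ f ∈ (box L J).filter p, exp (-s * m) * exp (-(t - s) * wt K f) := by
        refine Finset.sum_le_sum fun f hf => ?_
        rw [← exp_add, exp_le_exp]
        linarith [hp f (Finset.mem_filter.1 hf).2]
    _ ≤ ∑ f ∈ box L J, exp (-s * m) * exp (-(t - s) * wt K f) :=
        Finset.sum_le_sum_of_subset_of_nonneg (Finset.filter_subset _ _)
          fun _ _ _ => by positivity
    _ = exp (-s * m) * Z K L J (t - s) := by rw [Z, Finset.mul_sum]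
    _ ≤ _ := by gcongr; exact Z_le K L J hK _ hts

/-- The Boltzmann distribution concentrates near weight `π² / (6 t²)`, so there are about
`exp (2 (π² / 6) / t)` vectors of weight at most `(1 + δ) π² / (6 t²)`. -/
lemma exists_count_ge (K : ℕ) (hK : 1 ≤ K) (δ : ℝ) (hδ : 0 < δ) (hδ1 : δ < 1) :
    ∃ t₀ > 0, ∀ t, 0 < t → t < t₀ → ∃ L, ∃ S : Finset (Fin L → ℕ),
      (∀ f ∈ S, (wt K f : ℝ) ≤ (1 + δ) * (π ^ 2 / 6) / t ^ 2) ∧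
      exp ((2 - 2 * δ) * (π ^ 2 / 6) / t) ≤ S.card := by
  set E := π ^ 2 / 6 with hE
  have hE0 : 0 < E := by positivity
  obtain ⟨t₀, ht₀, h⟩ := exists_Z_ge K hK ((1 - δ ^ 2 / 16) * E) (by nlinarith [sq_pos_of_pos hδ])
  refine ⟨min t₀ (δ ^ 2 * E / 64), by positivity, fun t ht htt => ?_⟩
  obtain ⟨L, J, hZ⟩ := h t ht (htt.trans_le (min_le_left _ _))
  have htE : 4 ≤ δ ^ 2 / 16 * (E / t) := by
    have := htt.trans_le (min_le_right _ _)
    rw [← mul_div_assoc, le_div_iff₀ ht]; linarith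
  set m₁ := (1 + δ) * E / t ^ 2 with hm₁
  set m₀ := (1 - δ) * E / t ^ 2 with hm₀
  set U := (box L J).filter fun f => m₁ < (wt K f : ℝ) with hU
  set D := (box L J).filter fun f => (wt K f : ℝ) < m₀ with hD
  set S := (box L J).filter fun f => (wt K f : ℝ) ≤ m₁ ∧ m₀ ≤ wt K f with hS
  refine ⟨L, S, fun f hf => (Finset.mem_filter.1 hf).2.1, ?_⟩
  have hup : ∑ f ∈ U, exp (-t * wt K f) ≤ exp ((1 - δ ^ 2 / 8) * (E / t)) := by
    refine (tail_le K L J hK t (δ / 4 * t) m₁ (by nlinarith) _ fun f hf => ?_).trans ?_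
    · have : 0 < δ / 4 * t := by positivity
      exact mul_nonneg this.le (by linarith)
    · rw [exp_le_exp]
      have h1 : E / (t - δ / 4 * t) ≤ (1 + δ / 4 + 2 * (δ / 4) ^ 2) * (E / t) := by
        have : E / (t - δ / 4 * t) = 1 / (1 - δ / 4) * (E / t) := by
          have : (4 - δ) ≠ 0 := by linarith
          field_simp
        rw [this]
        gcongr
        rw [div_le_iff₀ (by linarith)]
        nlinarith [sq_nonneg δ, mul_pos hδ hδ]
      have h2 : -(δ / 4 * t) * m₁ = -(δ / 4 * (1 + δ)) * (E / t) := by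
        rw [hm₁]; field_simp
      rw [h2]
      refine (add_le_add_right h1 _).trans (le_of_eq (by ring))
  have hdown : ∑ f ∈ D, exp (-t * wt K f) ≤ exp ((1 - δ ^ 2 / 8) * (E / t)) := by
    refine (tail_le K L J hK t (-(δ / 4 * t)) m₀ (by nlinarith) _ fun f hf => ?_).trans ?_
    · have : 0 < δ / 4 * t := by positivity
      nlinarith
    · rw [exp_le_exp]
      have h1 : E / (t - -(δ / 4 * t)) ≤ (1 - δ / 4 + 2 * (δ / 4) ^ 2) * (E / t) := by
        have : E / (t - -(δ / 4 * t)) = 1 / (1 + δ / 4) * (E / t) := by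
          have : (4 + δ) ≠ 0 := by linarith
          have : t + δ / 4 * t ≠ 0 := by positivity
          rw [sub_neg_eq_add]
          field_simp
        rw [this]
        gcongr
        rw [div_le_iff₀ (by linarith)]
        nlinarith [sq_nonneg δ, mul_pos hδ hδ, pow_pos hδ 3]
      have h2 : -(-(δ / 4 * t)) * m₀ = (δ / 4 * (1 - δ)) * (E / t) := by
        rw [hm₀]; field_simp
      rw [h2]
      refine (add_le_add_right h1 _).trans (le_of_eq (by ring))
  have hmid : ∑ f ∈ S, exp (-t * wt K f) ≤ S.card * exp (-((1 - δ) * (E / t))) := by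
    rw [← nsmul_eq_mul]
    refine Finset.sum_le_card_nsmul _ _ _ fun f hf => ?_
    rw [exp_le_exp]
    have := (Finset.mem_filter.1 hf).2.2
    have h3 : (1 - δ) * (E / t) = t * m₀ := by rw [hm₀]; field_simp
    rw [h3]; nlinarith
  have hsplit : Z K L J t ≤ ∑ f ∈ U, exp (-t * wt K f) + ∑ f ∈ D, exp (-t * wt K f) +
      ∑ f ∈ S, exp (-t * wt K f) := by
    rw [Z, hU, hD, hS, Finset.sum_filter, Finset.sum_filter, Finset.sum_filter,
      ← Finset.sum_add_distrib, ← Finset.sum_add_distrib]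
    refine Finset.sum_le_sum fun f _ => ?_
    have := exp_pos (-t * wt K f)
    split_ifs <;> first | linarith | (exfalso; grind)
  -- Both tails together are at most half of `Z`, because `exp (δ² / 16 · E / t) ≥ exp 4 ≥ 4`.
  set T := exp ((1 - δ ^ 2 / 8) * (E / t)) with hT
  have hT0 : 0 < T := exp_pos _
  have hZ' : T * exp (δ ^ 2 / 16 * (E / t)) ≤ Z K L J t := by
    rw [hT, ← exp_add]
    refine le_trans (le_of_eq ?_) hZ
    congr 1; ring
  have h4 : 4 ≤ exp (δ ^ 2 / 16 * (E / t)) := by linarith [add_one_le_exp (δ ^ 2 / 16 * (E / t))]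
  have hfin : T ≤ S.card * exp (-((1 - δ) * (E / t))) := by nlinarith
  have : exp ((2 - δ - δ ^ 2 / 8) * (E / t)) ≤ S.card := by
    calc _ = T * exp ((1 - δ) * (E / t)) := by rw [hT, ← exp_add]; congr 1; ring
      _ ≤ S.card * exp (-((1 - δ) * (E / t))) * exp ((1 - δ) * (E / t)) := by gcongr
      _ = S.card := by rw [mul_assoc, ← exp_add]; simp
  refine le_trans (exp_le_exp.2 ?_) this
  rw [mul_div_assoc]
  exact mul_le_mul_of_nonneg_right (by nlinarith) (by positivity : 0 ≤ E / t)

/-- The constant `c₀ = π √(2/3)`. -/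
noncomputable def c0 : ℝ := π * √(2 / 3)

lemma c0_pos : 0 < c0 := by unfold c0; positivity

lemma c0_eq : c0 = 2 * √(π ^ 2 / 6) := by
  have h : (2 : ℝ) / 3 = 2 ^ 2 / 6 := by norm_num
  rw [c0, h, sqrt_div (by positivity), sqrt_div (by positivity), sqrt_sq (by norm_num),
    sqrt_sq pi_pos.le]
  ring

/-- `exists_count_ge` with `t` chosen so that `(1 + δ) π² / (6 t²) = x`. -/
lemma exists_count_ge_sqrt (K : ℕ) (hK : 1 ≤ K) (δ : ℝ) (hδ : 0 < δ) (hδ1 : δ < 1) :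
    ∃ X : ℝ, 0 < X ∧ ∀ x ≥ X, ∃ L, ∃ S : Finset (Fin L → ℕ),
      (∀ f ∈ S, (wt K f : ℝ) ≤ x) ∧ exp ((1 - 2 * δ) * (c0 * √x)) ≤ S.card := by
  obtain ⟨t₀, ht₀, h⟩ := exists_count_ge K hK δ hδ hδ1
  rw [c0_eq]
  set E := π ^ 2 / 6 with hE
  have hE0 : 0 < E := by positivity
  refine ⟨(1 + δ) * E / (t₀ / 2) ^ 2, by positivity, fun x hx => ?_⟩
  have hx0 : 0 < x := lt_of_lt_of_le (by positivity) hx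
  set t := √((1 + δ) * E / x) with ht
  have ht0 : 0 < t := by positivity
  have ht2 : t ^ 2 = (1 + δ) * E / x := sq_sqrt (by positivity)
  have htt : t < t₀ := by
    have : t ≤ t₀ / 2 := by
      rw [ht, sqrt_le_left (by positivity), div_le_iff₀ hx0]
      rw [ge_iff_le, div_le_iff₀ (by positivity)] at hx
      linarith
    linarith
  obtain ⟨L, S, hS, hc⟩ := h t ht0 htt
  refine ⟨L, S, fun f hf => (hS f hf).trans (le_of_eq ?_), le_trans (exp_le_exp.2 ?_) hc⟩
  · rw [ht2]; field_simp
  · rw [le_div_iff₀ ht0]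
    have h1 : √x * t = √(1 + δ) * √E := by
      rw [ht, ← sqrt_mul hx0.le, ← sqrt_mul (by positivity)]
      congr 1; field_simp
    have h2 : √E * √E = E := mul_self_sqrt hE0.le
    have h3 : √(1 + δ) ≤ 1 + δ := by
      rw [sqrt_le_left (by positivity)]; nlinarith
    have h4 : (1 - 2 * δ) * (2 * √E * √x) * t = 2 * (1 - 2 * δ) * √(1 + δ) * E := by
      calc _ = 2 * (1 - 2 * δ) * √E * (√x * t) := by ring
        _ = 2 * (1 - 2 * δ) * √(1 + δ) * (√E * √E) := by rw [h1]; ring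
        _ = _ := by rw [h2]
    rw [h4]
    gcongr
    have h5 : 0 ≤ √(1 + δ) := sqrt_nonneg _
    rcases le_total 0 (1 - 2 * δ) with h6 | h6 <;> nlinarith

/-! ### Completing partial partitions -/

/-- Some finite subset `F` of `A` already represents every sufficiently large number. -/
lemma exists_finite_gen (A : Set ℕ) (hgcd : ∀ d : ℕ, (∀ a ∈ A, d ∣ a) → d = 1) :
    ∃ F : Finset ℕ, (∀ y ∈ F, y ∈ A) ∧ ∃ m₀, ∀ m ≥ m₀, ∃ R : Multiset ℕ,
      (∀ y ∈ R, y ∈ F) ∧ R.sum = m := by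
  have hg : Nat.setGcd A = 1 := hgcd _ fun a ha => Nat.setGcd_dvd_of_mem ha
  obtain ⟨n₀, hn₀⟩ := Nat.exists_mem_closure_of_ge A
  obtain ⟨l₁, hl₁, hs₁⟩ := AddSubmonoid.exists_multiset_of_mem_closure
    (hn₀ n₀ le_rfl (by simp [hg]))
  obtain ⟨l₂, hl₂, hs₂⟩ := AddSubmonoid.exists_multiset_of_mem_closure
    (hn₀ (n₀ + 1) (Nat.le_succ _) (by simp [hg]))
  set F := (l₁ + l₂).toFinset with hF
  -- The gcd of `F` divides both `n₀` and `n₀ + 1`.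
  have hgF : Nat.setGcd (F : Set ℕ) = 1 := by
    have h1 : Nat.setGcd (F : Set ℕ) ∣ n₀ := hs₁ ▸ Multiset.dvd_sum fun y hy =>
      Nat.setGcd_dvd_of_mem (by simp [hF, hy])
    have h2 : Nat.setGcd (F : Set ℕ) ∣ n₀ + 1 := hs₂ ▸ Multiset.dvd_sum fun y hy =>
      Nat.setGcd_dvd_of_mem (by simp [hF, hy])
    exact Nat.dvd_one.1 ((Nat.dvd_add_right h1).1 h2)
  refine ⟨F, fun y hy => ?_, ?_⟩
  · rw [hF, Multiset.mem_toFinset, Multiset.mem_add] at hy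
    exact hy.elim (hl₁ y) (hl₂ y)
  · obtain ⟨m₀, hm₀⟩ := Nat.exists_mem_closure_of_ge (F : Set ℕ)
    refine ⟨m₀, fun m hm => ?_⟩
    obtain ⟨R, hR, hs⟩ := AddSubmonoid.exists_multiset_of_mem_closure
      (hm₀ m hm (by simp [hgF]))
    exact ⟨R, fun y hy => Finset.mem_coe.1 (hR y hy), hs⟩

/-- Distinct multiplicity vectors on parts `b₀, b₁, … ∈ A` outside `F`, with sum at most `n - m₀`,
give distinct partitions of `n`: complete each one to a partition of `n` with parts from `F`. -/
lemma card_le_pA (A : Set ℕ) (hA : ∀ a ∈ A, 0 < a) (F : Finset ℕ) (hFA : ∀ y ∈ F, y ∈ A) (m₀ : ℕ)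
    (hF : ∀ m ≥ m₀, ∃ R : Multiset ℕ, (∀ y ∈ R, y ∈ F) ∧ R.sum = m) (L : ℕ) (b : Fin L → ℕ)
    (hb : Function.Injective b) (hbA : ∀ i, b i ∈ A) (hbF : ∀ i, b i ∉ F) (n : ℕ)
    (S : Finset (Fin L → ℕ)) (hS : ∀ f ∈ S, ∑ i, f i * b i + m₀ ≤ n) : S.card ≤ pA A n := by
  classical
  choose! R hRF hRs using hF
  set M : (Fin L → ℕ) → Multiset ℕ := fun f =>
    ∑ i, Multiset.replicate (f i) (b i) + R (n - ∑ i, f i * b i) with hM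
  have hmem : ∀ f ∈ S, ∀ y ∈ M f, y ∈ A := by
    intro f hf y hy
    rw [hM, Multiset.mem_add, Multiset.mem_sum] at hy
    rcases hy with ⟨i, -, hi⟩ | hy
    · rw [Multiset.eq_of_mem_replicate hi]; exact hbA i
    · exact hFA y (hRF _ (by have := hS f hf; omega) y hy)
  have hsum : ∀ f ∈ S, (M f).sum = n := by
    intro f hf
    have := hS f hf
    simp only [hM, Multiset.sum_add, Multiset.sum_sum, Multiset.sum_replicate, smul_eq_mul]
    rw [hRs _ (by omega)]
    omega
  have hcount : ∀ f ∈ S, ∀ i, (M f).count (b i) = f i := by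
    intro f hf i
    have h0 : (R (n - ∑ i, f i * b i)).count (b i) = 0 :=
      Multiset.count_eq_zero.2 fun h => hbF i (hRF _ (by have := hS f hf; omega) _ h)
    simp only [hM, Multiset.count_add, h0, Multiset.count_sum', Multiset.count_replicate, hb.eq_iff]
    simp
  have hinj : Function.Injective (fun f : S =>
      (⟨⟨M f, fun {y} hy => hA y (hmem f f.2 y hy), hsum f f.2⟩, hmem f f.2⟩ :
        {p : n.Partition // ∀ a ∈ p.parts, a ∈ A})) := by
    intro f g hfg
    have h : M f = M g := congrArg (fun p => p.1.parts) hfg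
    ext i
    rw [← hcount f f.2 i, ← hcount g g.2 i, h]
  have := Nat.card_le_card_of_injective _ hinj
  rwa [Nat.card_eq_finsetCard] at this

/-! ### The upper bound for `p_A` -/

/-- Chernoff bound: encoding partitions of `n` by multiplicities, `p_A(n) e^{-nt}` is at most the
generating function at `t`. -/
lemma pA_le (A : Set ℕ) (n : ℕ) (t : ℝ) (ht : 0 < t) :
    (pA A n : ℝ) ≤ exp (n * t + π ^ 2 / 6 / t) := by
  classical
  set T := (box n (n + 1)).filter fun f => wt 1 f = n with hT
  have hwt : ∀ p : n.Partition, wt 1 (fun i : Fin n => p.parts.count (i.val + 1)) = n := by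
    intro p
    have h1 : ∀ y ∈ p.parts, y ∈ Finset.Ico 1 (n + 1) := fun y hy => by
      have := Multiset.single_le_sum (fun _ _ => Nat.zero_le _) y hy
      rw [p.parts_sum] at this
      have := p.parts_pos hy
      simp; omega
    have h2 : p.parts.sum = ∑ y ∈ Finset.Ico 1 (n + 1), p.parts.count y • y := by
      rw [Finset.sum_multiset_count]
      refine Finset.sum_subset (fun y hy => h1 y (Multiset.mem_toFinset.1 hy)) fun y _ hy => ?_
      rw [Multiset.mem_toFinset] at hy
      simp [Multiset.count_eq_zero.2 hy]
    rw [p.parts_sum, Finset.sum_Ico_eq_sum_range] at h2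
    simp only [wt]
    rw [Fin.sum_univ_eq_sum_range (fun i => (1 + i) * p.parts.count (i + 1)) n]
    conv_rhs => rw [h2]
    refine Finset.sum_congr (by simp) fun i _ => ?_
    rw [smul_eq_mul, mul_comm, add_comm 1 i]
  have hcard : pA A n ≤ T.card := by
    rw [← Nat.card_eq_finsetCard]
    refine Nat.card_le_card_of_injective (fun p => (⟨fun i => p.1.parts.count (i.val + 1), ?_⟩ : T)) ?_
    · rw [hT, Finset.mem_filter]
      refine ⟨?_, hwt p.1⟩
      rw [box, Fintype.mem_piFinset]
      intro i
      have h := hwt p.1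
      rw [Finset.mem_range]
      have h3 : (1 + i.val) * p.1.parts.count (i.val + 1) ≤ n := by
        conv_rhs => rw [← h]
        exact Finset.single_le_sum
          (f := fun i : Fin n => (1 + i.val) * p.1.parts.count (i.val + 1))
          (fun _ _ => Nat.zero_le _) (Finset.mem_univ i)
      nlinarith
    · intro p q hpq
      have h : ∀ i : Fin n, p.1.parts.count (i.val + 1) = q.1.parts.count (i.val + 1) :=
        fun i => congrFun (congrArg Subtype.val hpq) i
      have hbig : ∀ (r : n.Partition) (y : ℕ), y = 0 ∨ n < y → r.parts.count y = 0 := by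
        intro r y hy
        refine Multiset.count_eq_zero.2 fun hm => ?_
        have h1 := Multiset.single_le_sum (fun _ _ => Nat.zero_le _) y hm
        rw [r.parts_sum] at h1
        have := r.parts_pos hm
        omega
      refine Subtype.ext (Nat.Partition.ext (Multiset.ext.2 fun y => ?_))
      by_cases hy : y = 0 ∨ n < y
      · rw [hbig _ _ hy, hbig _ _ hy]
      · have := h ⟨y - 1, by omega⟩
        simpa [Nat.sub_add_cancel (by omega : 1 ≤ y)] using this
  have hZ : (T.card : ℝ) * exp (-(n * t)) ≤ exp (π ^ 2 / 6 / t) := by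
    refine le_trans ?_ (Z_le 1 n (n + 1) le_rfl t ht)
    rw [← nsmul_eq_mul, ← Finset.sum_const]
    refine (Finset.sum_le_sum fun f hf => ?_).trans (Finset.sum_le_sum_of_subset_of_nonneg
      (Finset.filter_subset _ _) fun _ _ _ => (exp_pos _).le)
    rw [(Finset.mem_filter.1 hf).2]
    exact exp_le_exp.2 (by linarith)
  calc (pA A n : ℝ) ≤ T.card := by exact_mod_cast hcard
    _ = T.card * exp (-(n * t)) * exp (n * t) := by rw [mul_assoc, ← exp_add]; simp
    _ ≤ exp (π ^ 2 / 6 / t) * exp (n * t) := by gcongr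
    _ = _ := by rw [← exp_add, add_comm]

/-- The quotient is bounded above, so that its real-valued `liminf` is meaningful. -/
lemma isBoundedUnder_quotient (A : Set ℕ) :
    IsBoundedUnder (· ≤ ·) atTop
      (fun n : ℕ => Real.log (pA A n) / (π * √(2 / 3) * √n)) := by
  refine ⟨(1 + π ^ 2 / 6) / c0, eventually_map.2 ?_⟩
  filter_upwards [eventually_ge_atTop 1] with n hn
  have hn0 : (0 : ℝ) < n := by exact_mod_cast hn
  have hs : 0 < √(n : ℝ) := sqrt_pos.2 hn0
  have hlog : Real.log (pA A n) ≤ (1 + π ^ 2 / 6) * √n := by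
    rcases Nat.eq_zero_or_pos (pA A n) with h0 | h0
    · rw [h0]; simp; positivity
    · rw [log_le_iff_le_exp (by exact_mod_cast h0)]
      refine (pA_le A n (1 / √n) (by positivity)).trans (exp_le_exp.2 (le_of_eq ?_))
      have := mul_self_sqrt hn0.le
      field_simp
      nlinarith
  change _ / (c0 * √n) ≤ _
  have := c0_pos
  rw [div_le_div_iff₀ (by positivity) this]
  nlinarith

/-! ### The lower bound for `p_A` -/

/-- The lower density bound says that the `k`-th element of `A` is at most `(k + 1) / β`. -/
lemma nth_le_of_density (A : Set ℕ) (hA : ∀ a ∈ A, 0 < a) (hinf : A.Infinite) (β : ℝ)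
    (hβ : ∀ᶠ x : ℝ in atTop, β < (countA A x : ℝ) / x) :
    ∀ᶠ k : ℕ in atTop, β * Nat.nth (· ∈ A) k ≤ k + 1 := by
  have hmono : StrictMono (Nat.nth (· ∈ A)) := Nat.nth_strictMono hinf
  have ht : Tendsto (fun k : ℕ => (Nat.nth (· ∈ A) k : ℝ)) atTop atTop :=
    tendsto_natCast_atTop_atTop.comp hmono.tendsto_atTop
  filter_upwards [ht.eventually hβ] with k hk
  have hpos : (0 : ℝ) < Nat.nth (· ∈ A) k := by
    exact_mod_cast hA _ (Nat.nth_mem_of_infinite hinf k)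
  rw [lt_div_iff₀ hpos] at hk
  have hc : countA A (Nat.nth (· ∈ A) k : ℝ) ≤ k + 1 := by
    have hsub : {a : ℕ | a ∈ A ∧ (a : ℝ) ≤ (Nat.nth (· ∈ A) k : ℝ)} ⊆
        ((Finset.range (k + 1)).image (Nat.nth (· ∈ A)) : Finset ℕ) := by
      rintro a ⟨ha, hle⟩
      have : a ∈ Set.range (Nat.nth (· ∈ A)) := by
        rw [Nat.range_nth_of_infinite (p := (· ∈ A)) hinf]; exact ha
      obtain ⟨j, rfl⟩ := this
      have hj : j ≤ k := hmono.le_iff_le.1 (by exact_mod_cast hle)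
      simp only [Finset.coe_image, Set.mem_image]
      exact ⟨j, by simp; omega, rfl⟩
    refine (Set.ncard_le_ncard hsub (Finset.finite_toSet _)).trans ?_
    rw [Set.ncard_coe_finset]
    exact Finset.card_image_le.trans (by simp)
  have : (countA A (Nat.nth (· ∈ A) k : ℝ) : ℝ) ≤ k + 1 := by exact_mod_cast hc
  linarith

/-- If the elements `a_k` of `A` eventually satisfy `a_k ≤ (k + 1) / β`, replacing each part `k + 1`
by `a_k` shows that `p_A(n)` is at least the number of partitions of integers up to `β (n - m₀)`
with large parts. -/
lemma log_pA_ge (A : Set ℕ) (hA : ∀ a ∈ A, 0 < a) (hinf : A.Infinite)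
    (hgcd : ∀ d : ℕ, (∀ a ∈ A, d ∣ a) → d = 1) (β : ℝ) (hβ0 : 0 < β)
    (hβ : ∀ᶠ x : ℝ in atTop, β < (countA A x : ℝ) / x) (δ : ℝ) (hδ : 0 < δ) (hδ1 : δ < 1) :
    ∃ m₀ : ℕ, ∀ᶠ n : ℕ in atTop,
      (1 - 2 * δ) * (c0 * √(β * (n - m₀))) ≤ Real.log (pA A n) := by
  obtain ⟨F, hFA, m₀, hF⟩ := exists_finite_gen A hgcd
  obtain ⟨k₁, hk₁⟩ := eventually_atTop.1 (nth_le_of_density A hA hinf β hβ)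
  set k₀ := max k₁ (F.sup id + 1) with hk₀
  have hmono : StrictMono (Nat.nth (· ∈ A)) := Nat.nth_strictMono hinf
  obtain ⟨X, hX0, hX⟩ := exists_count_ge_sqrt (k₀ + 1) (by omega) δ hδ hδ1
  refine ⟨m₀, ?_⟩
  have ht : Tendsto (fun n : ℕ => β * ((n : ℝ) - m₀)) atTop atTop :=
    (tendsto_atTop_add_const_right _ (-(m₀ : ℝ)) tendsto_natCast_atTop_atTop).const_mul_atTop hβ0
  filter_upwards [ht.eventually (eventually_ge_atTop X)] with n hn
  obtain ⟨L, S, hS, hc⟩ := hX _ hn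
  have hle : S.card ≤ pA A n := by
    refine card_le_pA A hA F hFA m₀ hF L (fun i => Nat.nth (· ∈ A) (k₀ + i)) ?_ ?_ ?_ n S ?_
    · intro i j hij
      have := hmono.injective hij
      exact Fin.ext (by omega)
    · exact fun i => Nat.nth_mem_of_infinite hinf _
    · intro i hi
      have h1 : Nat.nth (· ∈ A) (k₀ + i) ≤ F.sup id := Finset.le_sup (f := id) hi
      have h2 := hmono.le_apply (x := k₀ + i)
      have h3 : F.sup id + 1 ≤ k₀ := le_max_right _ _
      omega
    · intro f hf
      have h1 := hS f hf
      have h2 : β * ((∑ i : Fin L, f i * Nat.nth (· ∈ A) (k₀ + i) : ℕ) : ℝ) ≤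
          (wt (k₀ + 1) f : ℝ) := by
        simp only [wt]
        push_cast
        rw [Finset.mul_sum]
        refine Finset.sum_le_sum fun i _ => ?_
        have h3 := hk₁ (k₀ + i) (le_trans (le_max_left _ _) (Nat.le_add_right _ _))
        push_cast at h3
        have h4 : (0 : ℝ) ≤ f i := Nat.cast_nonneg _
        nlinarith
      have h5 := le_of_mul_le_mul_left (h2.trans h1) hβ0
      have : ((∑ i : Fin L, f i * Nat.nth (· ∈ A) (k₀ + i) + m₀ : ℕ) : ℝ) ≤ n := by
        rw [Nat.cast_add]; linarith
      exact_mod_cast this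
  have hpos : (0 : ℝ) < S.card := lt_of_lt_of_le (exp_pos _) hc
  rw [← exp_le_exp, exp_log (hpos.trans_le (by exact_mod_cast hle))]
  exact hc.trans (by exact_mod_cast hle)

theorem liminf_partition_of_lower_density (A : Set ℕ) (hA : ∀ a ∈ A, 0 < a)
    (hinf : A.Infinite) (hgcd : ∀ d : ℕ, (∀ a ∈ A, d ∣ a) → d = 1) (α : ℝ)
    (hdL : α ≤ liminf (fun x : ℝ => (countA A x : ℝ) / x) atTop) :
    Real.sqrt α ≤
      liminf (fun n : ℕ =>
        Real.log (pA A n) / (Real.pi * Real.sqrt (2 / 3) * Real.sqrt n)) atTop := by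
  have hcob := (isBoundedUnder_quotient A).isCoboundedUnder_ge
  refine le_of_forall_lt fun c hc => ?_
  obtain ⟨c', hcc', hc'α⟩ := exists_between hc
  refine hcc'.trans_le (le_liminf_of_le hcob ?_)
  rcases le_or_gt c' 0 with hc0 | hc0
  · refine Eventually.of_forall fun n => hc0.trans ?_
    have := log_natCast_nonneg (pA A n)
    positivity
  · have hα : c' ^ 2 < α := by
      rw [← lt_sqrt hc0.le]; exact hc'α
    obtain ⟨γ, hcγ, hγα⟩ := exists_between hα
    obtain ⟨β, hγβ, hβα⟩ := exists_between hγα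
    have hγ0 : 0 < γ := (sq_pos_of_pos hc0).trans hcγ
    have hcs : c' < √γ := by rw [lt_sqrt hc0.le]; exact hcγ
    have hs0 : 0 < √γ := hc0.trans hcs
    have hβ : ∀ᶠ x : ℝ in atTop, β < (countA A x : ℝ) / x := by
      refine eventually_lt_of_lt_liminf (hβα.trans_le hdL) ⟨0, eventually_map.2 ?_⟩
      filter_upwards [eventually_ge_atTop 0] with x hx
      positivity
    -- With this `δ`, `(1 - 2 δ) √γ = c'`.
    have hδ : 0 < (1 - c' / √γ) / 2 := by
      have : c' / √γ < 1 := (div_lt_one hs0).2 hcs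
      linarith
    have hδ1 : (1 - c' / √γ) / 2 < 1 := by
      have : 0 < c' / √γ := by positivity
      linarith
    obtain ⟨m₀, hm₀⟩ := log_pA_ge A hA hinf hgcd β (hγ0.trans hγβ) hβ _ hδ hδ1
    have ht : Tendsto (fun n : ℕ => (β - γ) * (n : ℝ)) atTop atTop :=
      tendsto_natCast_atTop_atTop.const_mul_atTop (by linarith)
    filter_upwards [hm₀, ht.eventually (eventually_ge_atTop (β * m₀)), eventually_ge_atTop 1]
      with n h1 h2 h3
    have hn0 : (0 : ℝ) < n := by exact_mod_cast h3
    have hc0' := c0_pos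
    change _ ≤ _ / (c0 * √n)
    rw [le_div_iff₀ (by positivity)]
    refine le_trans ?_ h1
    have h4 : √γ * √n ≤ √(β * (n - m₀)) := by
      rw [← sqrt_mul hγ0.le]
      exact sqrt_le_sqrt (by linarith)
    have h5 : 1 - 2 * ((1 - c' / √γ) / 2) = c' / √γ := by ring
    rw [h5]
    calc c' * (c0 * √n) = c' / √γ * (c0 * (√γ * √n)) := by field_simp
      _ ≤ _ := by gcongr
end

section
/- Let A be an infinite set of positive integers with gcd(A) = 1. If the upper asymptotic density of A satisfies d_U(A) ≤ β, then limsup_{n→∞} (log p_A(n))/(c₀√n) ≤ √β, where c₀ = π√(2/3). -/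
/-!
The bound is the saddle-point (Rankin) estimate for the generating function. Every `t > 0`
satisfies `pA A n * exp (-t n) ≤ ∏ 1 / (1 - exp (-t a))`, the product being over `a ∈ A`, `a ≤ n`,
so `log (pA A n) ≤ t n + ∑ f a`, where `f a = -log (1 - exp (-t a))` is decreasing in `a`.

If `γ > β` and `γ > 0`, then `A` has at most `γ x + C` elements up to `x`, for a constant `C`. The
element of rank `j` is therefore at least `(j - C) / γ`. Bounding the first `C` elements by `f 1`
and the others by `f (i / γ)` with `i = j - C ≥ 1`, and expanding the logarithm, gives
`∑ f a ≤ C f 1 + ∑ₖ (1 / k) ∑ᵢ exp (-k t i / γ) ≤ C f 1 + ∑ₖ γ / (t k²) = C f 1 + γ π² / (6 t)`,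
while `f 1 ≤ log (1 + 1 / t)`. The choice `t = π √(γ / (6 n))` balances the two main terms, and
their sum is `√γ * π * √(2 / 3) * √n`; the remaining term is `O(log n)`. Finally `γ` tends to `β`.
-/

open Filter Asymptotics Real

/-! ### The generating function bound -/

/-- Rankin's bound: each coefficient of the generating function of partitions with parts in `A`
is controlled by the value of the (truncated) Euler product at a point `x ∈ (0, 1)`. -/
lemma pA_mul_pow_le (A : Set ℕ) (hA : ∀ a ∈ A, 0 < a) (n : ℕ) (S : Finset ℕ)
    (hS : ∀ a, a ∈ S ↔ a ∈ A ∧ a ≤ n) (x : ℝ) (hx0 : 0 < x) (hx1 : x < 1) :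
    (pA A n : ℝ) * x ^ n ≤ ∏ a ∈ S, (1 - x ^ a)⁻¹ := by
  classical
  -- A partition is determined by the multiplicities, at most `n`, of the elements of `S`.
  let P := {p : n.Partition // ∀ a ∈ p.parts, a ∈ A}
  let T := S.pi (fun _ => Finset.range (n + 1))
  let φ : P → (∀ a ∈ S, ℕ) := fun p a _ => p.1.parts.count a
  let w : (∀ a ∈ S, ℕ) → ℝ := fun c => ∏ a ∈ S.attach, (x ^ a.1) ^ (c a.1 a.2)
  have hsub : ∀ p : P, ∀ a ∈ p.1.parts, a ∈ S := fun p a ha =>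
    (hS a).2 ⟨p.2 a ha, by
      have := Multiset.single_le_sum (fun _ _ => Nat.zero_le _) a ha
      rwa [p.1.parts_sum] at this⟩
  have hsum : ∀ p : P, ∑ a ∈ S, p.1.parts.count a * a = n := by
    intro p
    conv_rhs => rw [← p.1.parts_sum]
    rw [Finset.sum_multiset_count_of_subset p.1.parts S
      (fun a ha => hsub p a (Multiset.mem_toFinset.1 ha))]
    simp
  have hφT : ∀ p : P, φ p ∈ T := by
    intro p
    refine Finset.mem_pi.2 fun a ha => Finset.mem_range.2 ?_
    have h1 : p.1.parts.count a * a ≤ n := by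
      conv_rhs => rw [← hsum p]
      exact Finset.single_le_sum (f := fun a => p.1.parts.count a * a)
        (fun _ _ => Nat.zero_le _) ha
    have h2 : 0 < a := hA a ((hS a).1 ha).1
    have h3 : p.1.parts.count a ≤ p.1.parts.count a * a := Nat.le_mul_of_pos_right _ h2
    show p.1.parts.count a < n + 1
    omega
  have hφinj : Function.Injective φ := by
    intro p q h
    apply Subtype.ext
    apply Nat.Partition.ext
    ext a
    by_cases ha : a ∈ S
    · exact congrFun (congrFun h a) ha
    · rw [Multiset.count_eq_zero_of_notMem (fun h' => ha (hsub p a h')),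
        Multiset.count_eq_zero_of_notMem (fun h' => ha (hsub q a h'))]
  have hw : ∀ p : P, w (φ p) = x ^ n := by
    intro p
    show ∏ a ∈ S.attach, (x ^ a.1) ^ (p.1.parts.count a.1) = x ^ n
    rw [Finset.prod_attach S (fun a => (x ^ a) ^ (p.1.parts.count a))]
    simp_rw [← pow_mul]
    rw [Finset.prod_pow_eq_pow_sum]
    congr 1
    exact (Finset.sum_congr rfl fun a _ => mul_comm _ _).trans (hsum p)
  calc (pA A n : ℝ) * x ^ n = ∑ p : P, w (φ p) := by
        simp only [hw, Finset.sum_const, nsmul_eq_mul, Finset.card_univ]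
        rw [pA, Nat.card_eq_fintype_card]
    _ = ∑ c ∈ Finset.univ.image φ, w c := by
        rw [Finset.sum_image (fun _ _ _ _ h => hφinj h)]
    _ ≤ ∑ c ∈ T, w c := by
        refine Finset.sum_le_sum_of_subset_of_nonneg ?_ fun c _ _ => ?_
        · intro c hc
          obtain ⟨p, -, rfl⟩ := Finset.mem_image.1 hc
          exact hφT p
        · exact Finset.prod_nonneg fun a _ => by positivity
    _ = ∏ a ∈ S, ∑ k ∈ Finset.range (n + 1), (x ^ a) ^ k := by
        rw [Finset.prod_sum]
    _ ≤ ∏ a ∈ S, (1 - x ^ a)⁻¹ := by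
        refine Finset.prod_le_prod (fun a _ => Finset.sum_nonneg fun k _ => by positivity) ?_
        intro a ha
        have h2 : 0 < a := hA a ((hS a).1 ha).1
        have h3 : x ^ a < 1 := pow_lt_one₀ hx0.le hx1 h2.ne'
        have h4 : 0 ≤ x ^ a := by positivity
        rw [← tsum_geometric_of_lt_one h4 h3]
        exact (summable_geometric_of_lt_one h4 h3).sum_le_tsum _ fun k _ => by positivity

lemma log_pA_le (A : Set ℕ) (hA : ∀ a ∈ A, 0 < a) (n : ℕ) (S : Finset ℕ)
    (hS : ∀ a, a ∈ S ↔ a ∈ A ∧ a ≤ n) (t : ℝ) (ht : 0 < t)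
    (hp : 0 < pA A n) :
    Real.log (pA A n) ≤ t * n + ∑ a ∈ S, -Real.log (1 - Real.exp (-(t * a))) := by
  have h := pA_mul_pow_le A hA n S hS (Real.exp (-t)) (Real.exp_pos _)
    (Real.exp_lt_one_iff.2 (by linarith))
  have hpow : ∀ a : ℕ, Real.exp (-t) ^ a = Real.exp (-(t * a)) := fun a => by
    rw [← Real.exp_nat_mul]; congr 1; ring
  simp only [hpow] at h
  have hp' : (0 : ℝ) < pA A n := by exact_mod_cast hp
  have h2 := Real.log_le_log (by positivity) h
  rw [Real.log_mul hp'.ne' (Real.exp_pos _).ne', Real.log_exp, Real.log_prod] at h2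
  · simp only [Real.log_inv] at h2
    linarith
  · intro a ha
    have h2 : (0 : ℝ) < a := by exact_mod_cast hA a ((hS a).1 ha).1
    have : Real.exp (-(t * a)) < 1 := Real.exp_lt_one_iff.2 (by nlinarith)
    exact inv_ne_zero (by linarith)

/-! ### The logarithm of the Euler product -/

lemma sum_exp_le (u : ℝ) (hu : 0 < u) (N : ℕ) :
    ∑ i ∈ Finset.range N, Real.exp (-(u * (i + 1 : ℕ))) ≤ 1 / u := by
  set q := Real.exp (-u) with hq
  have hpow : ∀ i : ℕ, Real.exp (-(u * (i + 1 : ℕ))) = q ^ (i + 1) := fun i => by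
    rw [hq, ← Real.exp_nat_mul]; congr 1; ring
  simp only [hpow]
  have hq0 : 0 < q := Real.exp_pos _
  have hq1 : q * (1 + u) ≤ 1 := by
    have h1 := Real.add_one_le_exp u
    have h2 : q * Real.exp u = 1 := by rw [hq, ← Real.exp_add]; simp
    nlinarith
  have hs : (∑ i ∈ Finset.range N, q ^ (i + 1)) * (1 - q) = q - q ^ (N + 1) := by
    induction N with
    | zero => simp
    | succ k ih => rw [Finset.sum_range_succ, add_mul, ih]; ring
  have hN : 0 < q ^ (N + 1) := by positivity
  have hlt : 0 < 1 - q := by nlinarith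
  rw [le_div_iff₀ hu]
  refine le_of_mul_le_mul_right ?_ hlt
  nlinarith

/-- The model case of parts `i / γ`, `i ≥ 1`, where the value `ζ(2) = π² / 6` enters. -/
lemma sum_model_le (t γ : ℝ) (ht : 0 < t) (hγ : 0 < γ) (N : ℕ) :
    ∑ i ∈ Finset.range N, -Real.log (1 - Real.exp (-(t * ((i + 1 : ℕ) / γ)))) ≤
      γ / t * (Real.pi ^ 2 / 6) := by
  have h1 : ∀ i ∈ Finset.range N,
      HasSum (fun k : ℕ => Real.exp (-(t * ((i + 1 : ℕ) / γ))) ^ (k + 1) / ((k : ℝ) + 1))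
        (-Real.log (1 - Real.exp (-(t * ((i + 1 : ℕ) / γ))))) := by
    intro i _
    apply Real.hasSum_pow_div_log_of_abs_lt_one
    rw [abs_of_pos (Real.exp_pos _)]
    apply Real.exp_lt_one_iff.2
    have : 0 < t * (((i + 1 : ℕ) : ℝ) / γ) := by positivity
    linarith
  have h2 := hasSum_sum h1
  have hz : HasSum (fun k : ℕ => 1 / ((k + 1 : ℕ) : ℝ) ^ 2) (Real.pi ^ 2 / 6) := by
    have := (hasSum_nat_add_iff' 1).2 hasSum_zeta_two
    simpa using this
  refine hasSum_le (fun k => ?_) h2 (hz.mul_left (γ / t))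
  have h3 := sum_exp_le ((k + 1 : ℕ) * t / γ) (by positivity) N
  rw [← Finset.sum_div]
  have h4 : ∑ i ∈ Finset.range N, Real.exp (-(t * ((i + 1 : ℕ) / γ))) ^ (k + 1) =
      ∑ i ∈ Finset.range N, Real.exp (-((k + 1 : ℕ) * t / γ * (i + 1 : ℕ))) := by
    refine Finset.sum_congr rfl fun i _ => ?_
    rw [← Real.exp_nat_mul]
    congr 1
    ring
  rw [h4, div_le_iff₀ (by positivity)]
  refine h3.trans (le_of_eq ?_)
  push_cast
  field_simp

lemma neg_log_anti (t x y : ℝ) (ht : 0 < t) (hx : 0 < x) (hxy : x ≤ y) :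
    -Real.log (1 - Real.exp (-(t * y))) ≤ -Real.log (1 - Real.exp (-(t * x))) := by
  have h1 : Real.exp (-(t * x)) < 1 := Real.exp_lt_one_iff.2 (by nlinarith)
  have h2 : Real.exp (-(t * y)) ≤ Real.exp (-(t * x)) := Real.exp_le_exp.2 (by nlinarith)
  exact neg_le_neg (Real.log_le_log (by linarith) (by linarith))

/-- Comparison of `A` with the model sequence, by the rank of each element. The `C` elements of
least rank have to be estimated separately, by the value at `1`. -/
lemma sum_le_of_count (S : Finset ℕ) (hS : ∀ a ∈ S, 0 < a) (t γ : ℝ) (ht : 0 < t) (hγ : 0 < γ)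
    (C : ℕ) (hC : ∀ a ∈ S, ((S.filter (· ≤ a)).card : ℝ) ≤ γ * a + C) :
    ∑ a ∈ S, -Real.log (1 - Real.exp (-(t * a))) ≤
      C * -Real.log (1 - Real.exp (-(t * 1))) + γ / t * (Real.pi ^ 2 / 6) := by
  classical
  let r : ℕ → ℕ := fun a => (S.filter (· ≤ a)).card
  have hr : ∀ a ∈ S, ∀ b ∈ S, a < b → r a < r b := by
    intro a _ b hb hab
    refine Finset.card_lt_card (Finset.ssubset_iff_of_subset ?_ |>.2 ⟨b, ?_, ?_⟩)
    · intro c hc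
      simp only [Finset.mem_filter] at hc ⊢
      exact ⟨hc.1, by omega⟩
    · simp [hb]
    · simp [hab]
  have hinj : ∀ a ∈ S, ∀ b ∈ S, r a = r b → a = b := by
    intro a ha b hb h
    rcases lt_trichotomy a b with h1 | h1 | h1
    · have := hr a ha b hb h1; omega
    · exact h1
    · have := hr b hb a ha h1; omega
  have hr1 : ∀ a ∈ S, 1 ≤ r a := fun a ha =>
    Finset.card_pos.2 ⟨a, by simp [ha]⟩
  have hrN : ∀ a, r a ≤ S.card := fun a => Finset.card_filter_le _ _
  have hf1 : 0 ≤ -Real.log (1 - Real.exp (-(t * 1))) := by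
    have h1 : Real.exp (-(t * 1)) < 1 := Real.exp_lt_one_iff.2 (by linarith)
    have h2 := Real.exp_pos (-(t * 1))
    exact neg_nonneg.2 (Real.log_nonpos (by linarith) (by linarith))
  rw [← Finset.sum_filter_add_sum_filter_not S (fun a => r a ≤ C)]
  refine add_le_add ?_ ?_
  · have hcard : (S.filter (fun a => r a ≤ C)).card ≤ C := by
      have : (S.filter (fun a => r a ≤ C)).card ≤ (Finset.Icc 1 C).card := by
        refine Finset.card_le_card_of_injOn r ?_ ?_
        · intro a ha
          have ha := Finset.mem_filter.1 ha
          exact Finset.mem_coe.2 (Finset.mem_Icc.2 ⟨hr1 a ha.1, ha.2⟩)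
        · intro a ha b hb
          exact hinj a (Finset.mem_filter.1 ha).1 b (Finset.mem_filter.1 hb).1
      simpa using this
    calc ∑ a ∈ S.filter (fun a => r a ≤ C), -Real.log (1 - Real.exp (-(t * a)))
        ≤ ∑ a ∈ S.filter (fun a => r a ≤ C), -Real.log (1 - Real.exp (-(t * 1))) := by
          refine Finset.sum_le_sum fun a ha => neg_log_anti t 1 a ht one_pos ?_
          exact_mod_cast hS a (Finset.mem_filter.1 ha).1
      _ = (S.filter (fun a => r a ≤ C)).card * -Real.log (1 - Real.exp (-(t * 1))) := by
          rw [Finset.sum_const, nsmul_eq_mul]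
      _ ≤ _ := mul_le_mul_of_nonneg_right (by exact_mod_cast hcard) hf1
  · let g : ℕ → ℝ := fun i => -Real.log (1 - Real.exp (-(t * ((i + 1 : ℕ) / γ))))
    refine le_trans ?_ (sum_model_le t γ ht hγ S.card)
    calc ∑ a ∈ S.filter (fun a => ¬ r a ≤ C), -Real.log (1 - Real.exp (-(t * a)))
        ≤ ∑ a ∈ S.filter (fun a => ¬ r a ≤ C), g (r a - C - 1) := by
          refine Finset.sum_le_sum fun a ha => ?_
          have ha := Finset.mem_filter.1 ha
          refine neg_log_anti t _ a ht (by positivity) ?_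
          rw [div_le_iff₀ hγ]
          have h1 := hC a ha.1
          have h2 : ((r a - C - 1 + 1 : ℕ) : ℝ) + C = r a := by
            have := ha.2
            have h3 : r a - C - 1 + 1 + C = r a := by omega
            exact_mod_cast h3
          have h4 : (r a : ℝ) ≤ γ * a + C := h1
          linarith
      _ = ∑ i ∈ (S.filter (fun a => ¬ r a ≤ C)).image (fun a => r a - C - 1), g i := by
          rw [Finset.sum_image]
          intro a ha b hb h
          have ha := Finset.mem_filter.1 ha
          have hb := Finset.mem_filter.1 hb
          refine hinj a ha.1 b hb.1 ?_
          have h1 := ha.2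
          have h2 := hb.2
          simp only at h
          omega
      _ ≤ ∑ i ∈ Finset.range S.card, g i := by
          refine Finset.sum_le_sum_of_subset_of_nonneg ?_ fun i _ _ => ?_
          · intro i hi
            obtain ⟨a, ha, rfl⟩ := Finset.mem_image.1 hi
            have h1 := (Finset.mem_filter.1 ha).2
            have h2 := hrN a
            exact Finset.mem_range.2 (by omega)
          · have h0 : 0 < t * (((i + 1 : ℕ) : ℝ) / γ) := by positivity
            have h1 : Real.exp (-(t * ((i + 1 : ℕ) / γ))) < 1 := Real.exp_lt_one_iff.2 (by linarith)
            have h2 := Real.exp_pos (-(t * ((i + 1 : ℕ) / γ)))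
            exact neg_nonneg.2 (Real.log_nonpos (by linarith) (by linarith))

/-! ### Counting function and upper density -/

lemma countA_nat_le (A : Set ℕ) (hA : ∀ a ∈ A, 0 < a) (x : ℝ) :
    countA A x ≤ ⌊x⌋₊ := by
  have h : {a : ℕ | a ∈ A ∧ (a : ℝ) ≤ x} ⊆ (Finset.Icc 1 ⌊x⌋₊ : Finset ℕ) := by
    intro a ha
    exact Finset.mem_coe.2 (Finset.mem_Icc.2 ⟨hA a ha.1, Nat.le_floor ha.2⟩)
  have := Set.ncard_le_ncard h (Finset.finite_toSet _)
  rw [Set.ncard_coe_finset] at this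
  simpa [countA] using this

/-- An upper density below `γ` gives a linear bound for the counting function at every natural
number: `C` absorbs the initial range where the density estimate does not hold yet. -/
lemma exists_count_bound (A : Set ℕ) (hA : ∀ a ∈ A, 0 < a) (β γ : ℝ) (hγ : 0 < γ) (hβγ : β < γ)
    (hdU : limsup (fun x : ℝ => (countA A x : ℝ) / x) atTop ≤ β) :
    ∃ C : ℕ, ∀ a : ℕ, (countA A a : ℝ) ≤ γ * a + C := by
  have hb : IsBoundedUnder (· ≤ ·) atTop (fun x : ℝ => (countA A x : ℝ) / x) := by
    refine isBoundedUnder_of_eventually_le (a := 1) ?_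
    filter_upwards [eventually_gt_atTop 0] with x hx
    rw [div_le_one hx]
    exact le_trans (by exact_mod_cast countA_nat_le A hA x) (Nat.floor_le hx.le)
  have hev := eventually_lt_of_limsup_lt (lt_of_le_of_lt hdU hβγ) hb
  obtain ⟨X, hX⟩ := eventually_atTop.1 hev
  refine ⟨⌈X⌉₊, fun a => ?_⟩
  by_cases h : X ≤ a
  · rcases Nat.eq_zero_or_pos a with rfl | ha
    · have := countA_nat_le A hA ((0 : ℕ) : ℝ)
      simp only [Nat.floor_natCast, Nat.le_zero] at this
      rw [this]
      simp
    · have ha' : (0 : ℝ) < a := by exact_mod_cast ha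
      have h1 := hX a h
      rw [div_lt_iff₀ ha'] at h1
      have : (0 : ℝ) ≤ ⌈X⌉₊ := by positivity
      linarith
  · have h1 : countA A a ≤ a := by simpa using countA_nat_le A hA (a : ℝ)
    have h2 : (countA A a : ℝ) ≤ a := by exact_mod_cast h1
    have h3 := Nat.le_ceil X
    have : 0 ≤ γ * a := by positivity
    linarith

/-! ### Asymptotics -/

/-- The estimate of `log (pA A n)` for every `n` and every saddle-point parameter `t`. When
`pA A n = 0` it holds because `Real.log 0 = 0`. -/
lemma log_pA_le_of_count (A : Set ℕ) (hA : ∀ a ∈ A, 0 < a) (γ : ℝ) (hγ : 0 < γ) (C : ℕ)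
    (hC : ∀ a : ℕ, (countA A a : ℝ) ≤ γ * a + C) (n : ℕ) (t : ℝ) (ht : 0 < t) :
    Real.log (pA A n) ≤ t * n + γ / t * (Real.pi ^ 2 / 6) + C * Real.log (1 + 1 / t) := by
  classical
  rcases Nat.eq_zero_or_pos (pA A n) with h0 | hp
  · have : 0 ≤ Real.log (1 + 1 / t) := Real.log_nonneg (by
      have : 0 < 1 / t := by positivity
      linarith)
    rw [h0]
    simp only [Nat.cast_zero, Real.log_zero]
    positivity
  let S := (Finset.range (n + 1)).filter (· ∈ A)
  have hS : ∀ a, a ∈ S ↔ a ∈ A ∧ a ≤ n := by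
    intro a
    simp only [S, Finset.mem_filter, Finset.mem_range]
    constructor
    · rintro ⟨h1, h2⟩; exact ⟨h2, by omega⟩
    · rintro ⟨h1, h2⟩; exact ⟨by omega, h1⟩
  have h1 := log_pA_le A hA n S hS t ht hp
  have h2 := sum_le_of_count S (fun a ha => hA a ((hS a).1 ha).1) t γ ht hγ C (by
    intro a _
    refine le_trans ?_ (hC a)
    have hsub : ((S.filter (· ≤ a) : Finset ℕ) : Set ℕ) ⊆ {b : ℕ | b ∈ A ∧ (b : ℝ) ≤ (a : ℝ)} := by
      intro b hb
      have hb := Finset.mem_filter.1 (Finset.mem_coe.1 hb)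
      exact ⟨((hS b).1 hb.1).1, by exact_mod_cast hb.2⟩
    have hfin : {b : ℕ | b ∈ A ∧ (b : ℝ) ≤ (a : ℝ)}.Finite :=
      (Set.finite_Iic a).subset fun b hb => by exact_mod_cast hb.2
    have := Set.ncard_le_ncard hsub hfin
    rw [Set.ncard_coe_finset] at this
    exact Nat.cast_le.2 this)
  have h3 : -Real.log (1 - Real.exp (-(t * 1))) ≤ Real.log (1 + 1 / t) := by
    rw [← Real.log_inv]
    have h4 : Real.exp (-(t * 1)) ≤ 1 / (1 + t) := by
      rw [mul_one, Real.exp_neg, one_div]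
      exact inv_anti₀ (by linarith) (by linarith [Real.add_one_le_exp t])
    have h6 : 0 < 1 / (1 + 1 / t) := by positivity
    have h5 : 1 / (1 + 1 / t) ≤ 1 - Real.exp (-(t * 1)) := by
      have : 1 / (1 + 1 / t) = 1 - 1 / (1 + t) := by field_simp; ring
      linarith
    have h7 := lt_of_lt_of_le h6 h5
    refine Real.log_le_log (inv_pos.2 h7) ?_
    have := inv_anti₀ h6 h5
    simpa using this
  have h4 := mul_le_mul_of_nonneg_left h3 (Nat.cast_nonneg (α := ℝ) C)
  linarith

theorem limsup_partition_of_upper_density (A : Set ℕ) (hA : ∀ a ∈ A, 0 < a)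
    (hinf : A.Infinite) (hgcd : ∀ d : ℕ, (∀ a ∈ A, d ∣ a) → d = 1) (β : ℝ)
    (hdU : limsup (fun x : ℝ => (countA A x : ℝ) / x) atTop ≤ β) :
    limsup (fun n : ℕ =>
        Real.log (pA A n) / (Real.pi * Real.sqrt (2 / 3) * Real.sqrt n)) atTop ≤
      Real.sqrt β := by
  refine le_of_forall_gt_imp_ge_of_dense fun b hb => ?_
  obtain ⟨c, hc1, hc2⟩ := exists_between hb
  have hc0 : 0 < c := lt_of_le_of_lt (Real.sqrt_nonneg _) hc1
  obtain ⟨C, hC⟩ := exists_count_bound A hA β (c ^ 2) (by positivity)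
    ((Real.sqrt_lt' hc0).1 hc1) hdU
  have hco : IsCoboundedUnder (· ≤ ·) atTop (fun n : ℕ =>
      Real.log (pA A n) / (Real.pi * Real.sqrt (2 / 3) * Real.sqrt n)) := by
    refine IsBoundedUnder.isCoboundedUnder_le
      (isBoundedUnder_of_eventually_ge (a := 0) (Eventually.of_forall fun n => ?_))
    have := Real.log_natCast_nonneg (pA A n)
    have := Real.pi_pos
    positivity
  refine limsup_le_of_le hco ?_
  set K : ℝ := Real.pi * Real.sqrt (2 / 3) with hK
  have hKpos : 0 < K := by have := Real.pi_pos; positivity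
  have hK2 : K ^ 2 = Real.pi ^ 2 * (2 / 3) := by
    rw [hK, mul_pow, Real.sq_sqrt (by norm_num)]
  -- `t = κ / √n` makes the two main terms `t n` and `c² π² / (6 t)` equal.
  set κ : ℝ := c * K / 2 with hκ
  have hκpos : 0 < κ := by positivity
  have hlim : Tendsto (fun n : ℕ => Real.sqrt n) atTop atTop :=
    Real.tendsto_sqrt_atTop.comp tendsto_natCast_atTop_atTop
  have hy : Tendsto (fun n : ℕ => 1 + Real.sqrt n / κ) atTop atTop :=
    tendsto_atTop_add_const_left _ _ (hlim.atTop_div_const hκpos)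
  -- The remaining term `C log (1 + √n / κ)` is at most `(b - c) K √n` for large `n`.
  obtain ⟨ε, hε, hεle⟩ : ∃ ε : ℝ, 0 < ε ∧ C * ε * (1 + 1 / κ) ≤ (b - c) * K := by
    have hpos : 0 < (b - c) * K := mul_pos (by linarith) hKpos
    have h1 : 0 < ((C : ℝ) + 1) * (1 + 1 / κ) := by positivity
    refine ⟨(b - c) * K / (((C : ℝ) + 1) * (1 + 1 / κ)), by positivity, ?_⟩
    have : (C : ℝ) * ((b - c) * K / (((C : ℝ) + 1) * (1 + 1 / κ))) * (1 + 1 / κ) =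
        (b - c) * K * (C / (C + 1)) := by
      field_simp
    rw [this]
    refine mul_le_of_le_one_right hpos.le ?_
    rw [div_le_one (by positivity)]
    linarith
  have hlog := hy.eventually (Real.isLittleO_log_id_atTop.bound hε)
  filter_upwards [hlog, eventually_ge_atTop 1] with n hn hn1
  have hn1' : (1 : ℝ) ≤ n := by exact_mod_cast hn1
  have hs1 : 1 ≤ Real.sqrt n := Real.one_le_sqrt.2 hn1'
  have hspos : 0 < Real.sqrt n := by linarith
  have hss : Real.sqrt n * Real.sqrt n = n := Real.mul_self_sqrt (by linarith)
  have hmain := log_pA_le_of_count A hA (c ^ 2) (by positivity) C hC n (κ / Real.sqrt n)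
    (by positivity)
  have e1 : κ / Real.sqrt n * n = κ * Real.sqrt n := by
    rw [div_mul_eq_mul_div, div_eq_iff hspos.ne', mul_assoc, hss]
  have e2 : c ^ 2 / (κ / Real.sqrt n) * (Real.pi ^ 2 / 6) = κ * Real.sqrt n := by
    have h1 : κ ^ 2 = c ^ 2 * (Real.pi ^ 2 / 6) := by
      rw [hκ, div_pow, mul_pow, hK2]; ring
    field_simp
    linarith
  have e3 : 1 / (κ / Real.sqrt n) = Real.sqrt n / κ := by field_simp
  rw [e1, e2, e3] at hmain
  have hlog2 : Real.log (1 + Real.sqrt n / κ) ≤ ε * (1 + Real.sqrt n / κ) := by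
    have h1 : 0 ≤ 1 + Real.sqrt n / κ := by positivity
    simp only [id, Real.norm_eq_abs, abs_of_nonneg h1] at hn
    exact (le_abs_self _).trans hn
  have hlog3 : C * Real.log (1 + Real.sqrt n / κ) ≤ (b - c) * K * Real.sqrt n := by
    calc C * Real.log (1 + Real.sqrt n / κ) ≤ C * (ε * (1 + Real.sqrt n / κ)) := by gcongr
      _ ≤ C * (ε * (Real.sqrt n + Real.sqrt n / κ)) := by gcongr
      _ = C * ε * (1 + 1 / κ) * Real.sqrt n := by ring
      _ ≤ _ := by gcongr
  rw [div_le_iff₀ (by positivity)]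
  have : κ * Real.sqrt n + κ * Real.sqrt n = c * K * Real.sqrt n := by rw [hκ]; ring
  nlinarith
end
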